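/- Let A be a separable unital C*-algebra of stable rank one and let k ∈ ℕ with k ≥ 1. Then A has no nonzero representation of dimension less than k if and only if there exists a *-homomorphism φ : M_k(C_0((0,1])) → A whose range generates A as a closed two-sided ideal (i.e., φ has full range). -/

import Mathlib

section G1
open Filter Topology Set
set_option linter.unusedSectionVars false
set_option linter.unusedVariables false
variable {A : Type*} [CStarAlgebra A]

lemma gl_cm (f g : ℝ → ℝ) (hf : Continuous f) (hg : Continuous g) (a : A) :
    cfc f a * cfc g a = cfc (fun t => f t * g t) a :=
  (cfc_mul f g a hf.continuousOn hg.continuousOn).symm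

lemma gl_comm (f g : ℝ → ℝ) (a : A) : cfc f a * cfc g a = cfc g a * cfc f a :=
  cfc_commute_cfc f g a

lemma gl_star (f : ℝ → ℝ) (a : A) : star (cfc f a) = cfc f a :=
  (cfc_predicate (p := IsSelfAdjoint) f a).star_eq

lemma gl_id (a : A) (ha : IsSelfAdjoint a) : cfc (fun t : ℝ => t) a = a := cfc_id' ℝ a

lemma gl_one (a : A) (ha : IsSelfAdjoint a) : cfc (fun _ : ℝ => 1) a = 1 := cfc_const_one ℝ a

lemma gl_mid (f : ℝ → ℝ) (hf : Continuous f) (a : A) (ha : IsSelfAdjoint a) :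
    cfc f a * a = cfc (fun t => f t * t) a := by
  conv_lhs => rw [← gl_id a ha]
  rw [gl_id a ha]
  conv_lhs => rw [← gl_id a ha, gl_id a ha]
  have := gl_cm f (fun t => t) hf continuous_id a
  rw [gl_id a ha] at this
  exact this

lemma gl_idm (f : ℝ → ℝ) (hf : Continuous f) (a : A) (ha : IsSelfAdjoint a) :
    a * cfc f a = cfc (fun t => t * f t) a := by
  have := gl_cm (fun t => t) f continuous_id hf a
  rw [gl_id a ha] at this
  exact this

lemma gl_sub (f g : ℝ → ℝ) (hf : Continuous f) (hg : Continuous g) (a : A) :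
    cfc f a - cfc g a = cfc (fun t => f t - g t) a :=
  (cfc_sub f g a hf.continuousOn hg.continuousOn).symm

lemma gl_one_sub (f : ℝ → ℝ) (hf : Continuous f) (a : A) (ha : IsSelfAdjoint a) :
    1 - cfc f a = cfc (fun t => 1 - f t) a := by
  rw [← gl_one a ha, gl_sub _ _ continuous_const hf]

lemma gl_zero (f : ℝ → ℝ) (a : A) (h : ∀ t, f t = 0) : cfc f a = 0 := by
  have : f = fun _ => 0 := funext h
  rw [this]; exact cfc_const_zero ℝ a

lemma gl_smul (c : ℝ) (f : ℝ → ℝ) (hf : Continuous f) (a : A) :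
    c • cfc f a = cfc (fun t => c * f t) a :=
  (cfc_smul c f a hf.continuousOn).symm

lemma gl_alg (f : ℝ → ℝ) (c : ℝ) : cfc f (algebraMap ℝ A c) = algebraMap ℝ A (f c) :=
  cfc_algebraMap c f

/-- intertwining modulo a closed ideal -/
lemma gl_tw (I : TwoSidedIdeal A) (hI : IsClosed (I : Set A)) (a b x : A)
    (ha : IsSelfAdjoint a) (hb : IsSelfAdjoint b) (h : a * x - x * b ∈ I)
    (f : ℝ → ℝ) (hf : Continuous f) : cfc f a * x - x * cfc f b ∈ I := by
  have hpoly : ∀ p : Polynomial ℝ, cfc p.eval a * x - x * cfc p.eval b ∈ I := by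
    intro p
    rw [cfc_polynomial p a ha, cfc_polynomial p b hb]
    induction p using Polynomial.induction_on' with
    | add p q hp hq =>
      have := I.add_mem hp hq
      convert this using 1
      simp only [map_add]; noncomm_ring
    | monomial n c =>
      have h1 : ∀ n : ℕ, a ^ n * x - x * b ^ n ∈ I := by
        intro n
        induction n with
        | zero => simp [I.zero_mem]
        | succ n ih =>
          have := I.add_mem (I.mul_mem_left a _ ih) (I.mul_mem_right _ (b ^ n) h)
          convert this using 1
          rw [pow_succ' a, pow_succ' b]; noncomm_ring
      have h2 := I.mul_mem_left (algebraMap ℝ A c) _ (h1 n)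
      convert h2 using 1
      simp only [Polynomial.aeval_monomial]
      rw [mul_sub, mul_assoc, ← mul_assoc x, ← Algebra.commutes c x, mul_assoc]
  obtain ⟨R, hRa, hRb⟩ : ∃ R : ℝ, spectrum ℝ a ⊆ Icc (-R) R ∧ spectrum ℝ b ⊆ Icc (-R) R := by
    refine ⟨max (‖a‖*‖(1:A)‖) (‖b‖*‖(1:A)‖), fun t ht => ?_, fun t ht => ?_⟩
    · have := spectrum.norm_le_norm_mul_of_mem ht
      rw [Real.norm_eq_abs] at this
      exact abs_le.1 (this.trans (le_max_left _ _))
    · have := spectrum.norm_le_norm_mul_of_mem ht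
      rw [Real.norm_eq_abs] at this
      exact abs_le.1 (this.trans (le_max_right _ _))
  have key : cfc f a * x - x * cfc f b ∈ closure (I : Set A) := by
    rw [Metric.mem_closure_iff]
    intro ε hε
    set δ := ε / (2 * (‖x‖ + 1)) with hδ
    have hx : 0 < ‖x‖ + 1 := by positivity
    have hδ0 : 0 < δ := by positivity
    obtain ⟨p, hp⟩ := exists_polynomial_near_of_continuousOn (-R) R f hf.continuousOn δ hδ0
    refine ⟨_, hpoly p, ?_⟩
    have e1 : ∀ c : A, spectrum ℝ c ⊆ Icc (-R) R → ‖cfc f c - cfc p.eval c‖ ≤ δ := by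
      intro c hc
      rw [gl_sub f _ hf p.continuous]
      refine norm_cfc_le hδ0.le fun t ht => ?_
      rw [Real.norm_eq_abs, abs_sub_comm]
      exact (hp t (hc ht)).le
    rw [dist_eq_norm]
    have : cfc f a * x - x * cfc f b - (cfc p.eval a * x - x * cfc p.eval b)
      = (cfc f a - cfc p.eval a) * x - x * (cfc f b - cfc p.eval b) := by noncomm_ring
    rw [this]
    calc _ ≤ ‖(cfc f a - cfc p.eval a) * x‖ + ‖x * (cfc f b - cfc p.eval b)‖ := norm_sub_le _ _
      _ ≤ δ * ‖x‖ + ‖x‖ * δ := by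
        gcongr
        · exact (norm_mul_le _ _).trans (by gcongr; exact e1 a hRa)
        · exact (norm_mul_le _ _).trans (by gcongr; exact e1 b hRb)
      _ < 2 * (‖x‖ + 1) * δ := by nlinarith
      _ = ε := by rw [hδ]; field_simp
  rwa [hI.closure_eq] at key

lemma gl_tw0 (a b x : A)
    (ha : IsSelfAdjoint a) (hb : IsSelfAdjoint b) (h : a * x = x * b)
    (f : ℝ → ℝ) (hf : Continuous f) : cfc f a * x = x * cfc f b := by
  have hc : IsClosed ((⊥ : TwoSidedIdeal A) : Set A) := by
    have : ((⊥ : TwoSidedIdeal A) : Set A) = {0} := by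
      ext y; simp [TwoSidedIdeal.mem_bot]
    rw [this]; exact isClosed_singleton
  have := gl_tw ⊥ hc a b x ha hb (by rw [h, sub_self]; exact TwoSidedIdeal.zero_mem _) f hf
  rw [TwoSidedIdeal.mem_bot] at this
  exact sub_eq_zero.1 this

lemma gl_ann (a x : A) (ha : IsSelfAdjoint a) (h : a * x = 0) (f : ℝ → ℝ) (hf : Continuous f) :
    cfc f a * x = f 0 • x := by
  have := gl_tw0 a 0 x ha (IsSelfAdjoint.zero A) (by simpa using h) f hf
  have h0 := gl_alg (A := A) f 0
  rw [map_zero] at h0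
  rw [this, h0, ← Algebra.commutes, Algebra.smul_def]

lemma gl_smul_mem (I : TwoSidedIdeal A) (c : ℝ) {x : A} (h : x ∈ I) : c • x ∈ I := by
  rw [Algebra.smul_def]; exact I.mul_mem_left _ _ h

lemma gl_csmul_mem (I : TwoSidedIdeal A) (c : ℂ) {x : A} (h : x ∈ I) : c • x ∈ I := by
  rw [Algebra.smul_def]; exact I.mul_mem_left _ _ h

lemma gl_eig (I : TwoSidedIdeal A) (hI : IsClosed (I : Set A)) (a x : A) (c : ℝ)
    (ha : IsSelfAdjoint a) (h : a * x - c • x ∈ I)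
    (f : ℝ → ℝ) (hf : Continuous f) : cfc f a * x - f c • x ∈ I := by
  have h' : a * x - x * algebraMap ℝ A c ∈ I := by
    rwa [← Algebra.commutes, ← Algebra.smul_def]
  have := gl_tw I hI a (algebraMap ℝ A c) x ha (.algebraMap A (.all c)) h' f hf
  rwa [gl_alg, ← Algebra.commutes, ← Algebra.smul_def] at this

lemma gl_congr (I : TwoSidedIdeal A) (hI : IsClosed (I : Set A)) (a b : A)
    (ha : IsSelfAdjoint a) (hb : IsSelfAdjoint b) (h : a - b ∈ I)
    (f : ℝ → ℝ) (hf : Continuous f) : cfc f a - cfc f b ∈ I := by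
  have := gl_tw I hI a b 1 ha hb (by simpa using h) f hf
  simpa using this

lemma gl_mem (I : TwoSidedIdeal A) (hI : IsClosed (I : Set A)) (a : A)
    (ha : IsSelfAdjoint a) (h : a ∈ I)
    (f : ℝ → ℝ) (hf : Continuous f) (h0 : f 0 = 0) : cfc f a ∈ I := by
  have := gl_eig I hI a 1 0 ha (by simpa using h) f hf
  simpa [h0] using this

/-- f(XX*)X = X f(X*X) -/
lemma gl_swap (X : A) (f : ℝ → ℝ) (hf : Continuous f) :
    cfc f (X * star X) * X = X * cfc f (star X * X) :=
  gl_tw0 _ _ _ (.mul_star_self X) (.star_mul_self X) (by rw [mul_assoc]) f hf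

variable [PartialOrder A] [StarOrderedRing A]

lemma gl_nn (f : ℝ → ℝ) (a : A) (ha : 0 ≤ a) (h : ∀ t, 0 ≤ t → 0 ≤ f t) : 0 ≤ cfc f a :=
  cfc_nonneg fun t ht => h t (spectrum_nonneg_of_nonneg ha ht)

lemma gl_nn' (f : ℝ → ℝ) (a : A) (h : ∀ t, 0 ≤ f t) : 0 ≤ cfc f a :=
  cfc_nonneg fun t _ => h t

lemma gl_mono (f g : ℝ → ℝ) (hf : Continuous f) (hg : Continuous g) (a : A) (ha : 0 ≤ a)
    (h : ∀ t, 0 ≤ t → f t ≤ g t) : cfc f a ≤ cfc g a :=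
  cfc_mono (fun t ht => h t (spectrum_nonneg_of_nonneg ha ht)) hf.continuousOn hg.continuousOn

lemma gl_eq (f g : ℝ → ℝ) (a : A) (ha : 0 ≤ a)
    (h : ∀ t, 0 ≤ t → f t = g t) : cfc f a = cfc g a :=
  cfc_congr fun t ht => h t (spectrum_nonneg_of_nonneg ha ht)

lemma gl_norm (f : ℝ → ℝ) (a : A) (ha : 0 ≤ a) (c : ℝ) (hc : 0 ≤ c)
    (h : ∀ t, 0 ≤ t → |f t| ≤ c) : ‖cfc f a‖ ≤ c :=
  norm_cfc_le hc fun t ht => h t (spectrum_nonneg_of_nonneg ha ht)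

lemma gl_sa {a : A} (ha : 0 ≤ a) : IsSelfAdjoint a := .of_nonneg ha

/-- f(a) ≤ C a -/
lemma gl_le_smul (f : ℝ → ℝ) (hf : Continuous f) (a : A) (ha : 0 ≤ a) (C : ℝ)
    (h : ∀ t, 0 ≤ t → f t ≤ C * t) : cfc f a ≤ C • a := by
  have := gl_mono f (fun t => C * t) hf (by fun_prop) a ha h
  rwa [← gl_smul C (fun t => t) continuous_id, gl_id a (gl_sa ha)] at this

lemma gl_conj_mono {x y : A} (h : x ≤ y) (c : A) : star c * x * c ≤ star c * y * c :=
  star_left_conjugate_le_conjugate h c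

lemma gl_conj_nn {x : A} (h : 0 ≤ x) (c : A) : 0 ≤ star c * x * c :=
  star_left_conjugate_nonneg h c

lemma gl_ss (c : A) : 0 ≤ star c * c := star_mul_self_nonneg c

lemma gl_sq_le {x y : A} {C : ℝ} (hy : 0 ≤ y) (h : star x * x ≤ C • y) (k : A) (hk : y * k = 0) :
    x * k = 0 := by
  have h1 := gl_conj_mono h k
  have h2 : star k * (C • y) * k = 0 := by rw [mul_assoc, smul_mul_assoc, hk]; simp
  rw [h2] at h1
  have h3 : star (x * k) * (x * k) ≤ 0 := by
    convert h1 using 1; rw [star_mul]; noncomm_ring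
  have h4 : star (x * k) * (x * k) = 0 := le_antisymm h3 (gl_ss _)
  exact CStarRing.star_mul_self_eq_zero_iff _ |>.1 h4

noncomputable def glS (a : A) : A := cfc (fun t : ℝ => Real.sqrt t) a

lemma glS_nn (a : A) (ha : 0 ≤ a): 0 ≤ glS a := gl_nn _ _ ha fun t _ => Real.sqrt_nonneg t
lemma glS_star (a : A) : star (glS a) = glS a := gl_star _ _
lemma glS_sq (a : A) (ha : 0 ≤ a) : glS a * glS a = a := by
  unfold glS
  rw [gl_cm _ _ (by fun_prop) (by fun_prop)]
  conv_rhs => rw [← gl_id a (gl_sa ha)]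
  exact gl_eq _ _ a ha fun t ht => Real.mul_self_sqrt ht

lemma gl_dom {z y : A} {C : ℝ} (hz : 0 ≤ z) (hy : 0 ≤ y) (h : z ≤ C • y) (k : A)
    (hk : y * k = 0) : z * k = 0 := by
  have : glS z * k = 0 := gl_sq_le hy (x := glS z) (C := C) (by rw [glS_star, glS_sq z hz]; exact h) k hk
  rw [← glS_sq z hz, mul_assoc, this, mul_zero]

/-- dominated annihilation -/
lemma gl_dom' {z d : A} {C : ℝ} (hz : 0 ≤ z) (h : z ≤ C • (star d * d)) (k : A)
    (hk : d * k = 0) : z * k = 0 :=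
  gl_dom hz (gl_ss d) h k (by rw [mul_assoc, hk, mul_zero])

/-- key lemma for closed ideals -/
lemma gl_key (I : TwoSidedIdeal A) (hI : IsClosed (I : Set A)) {b y : A} (hy : y ∈ I)
    (h : star b * b ≤ y) : b ∈ I := by
  have hy0 : 0 ≤ y := (gl_ss b).trans h
  have hys := gl_sa hy0
  have key : b ∈ closure (I : Set A) := by
    rw [Metric.mem_closure_iff]
    intro ε hε
    set δ := ε ^ 2 / 4 with hδ
    have hδ0 : 0 < δ := by positivity
    have hc : Continuous fun t : ℝ => (max t δ)⁻¹ :=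
      Continuous.inv₀ (by fun_prop) fun t => (lt_max_of_lt_right hδ0).ne'
    have hp : cfc (fun t : ℝ => (max t δ)⁻¹ * t) y ∈ I := by
      rw [← gl_mid _ hc y hys]; exact I.mul_mem_left _ _ hy
    refine ⟨b * cfc (fun t : ℝ => (max t δ)⁻¹ * t) y, I.mul_mem_left _ _ hp, ?_⟩
    have hc1 : Continuous fun t : ℝ => 1 - (max t δ)⁻¹ * t := by fun_prop
    set q := cfc (fun t : ℝ => 1 - (max t δ)⁻¹ * t) y with hq
    have e1 : b - b * cfc (fun t : ℝ => (max t δ)⁻¹ * t) y = b * q := by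
      rw [hq, ← gl_one_sub _ (by fun_prop) y hys]; noncomm_ring
    rw [dist_eq_norm, e1]
    have e2 : star (b * q) * (b * q) ≤ q * y * q := by
      have := gl_conj_mono h q
      rw [hq, gl_star] at this
      rw [star_mul, hq, gl_star]
      convert this using 1; noncomm_ring
    have e3 : ‖q * y * q‖ ≤ δ := by
      rw [hq, gl_mid _ hc1 y hys, gl_cm _ _ (by fun_prop) hc1]
      refine gl_norm _ _ hy0 δ hδ0.le fun t ht => ?_
      rcases le_total t δ with h | h
      · rw [max_eq_right h]
        have a1 : 0 ≤ δ⁻¹ * t := by positivity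
        have a2 : δ⁻¹ * t ≤ 1 := by rw [inv_mul_le_iff₀ hδ0]; linarith
        rw [abs_of_nonneg (mul_nonneg (mul_nonneg (by linarith) ht) (by linarith))]
        have : (1 - δ⁻¹ * t) * t * (1 - δ⁻¹ * t) = (1 - δ⁻¹ * t)^2 * t := by ring
        rw [this]
        calc _ ≤ 1 * t := by gcongr; nlinarith
          _ ≤ δ := by linarith
      · rw [max_eq_left h, inv_mul_cancel₀ (by linarith)]; simpa using hδ0.le
    have e4 := CStarAlgebra.norm_le_norm_of_nonneg_of_le (gl_ss (b * q)) e2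
    rw [CStarRing.norm_star_mul_self] at e4
    nlinarith [norm_nonneg (b * q)]
  rwa [hI.closure_eq] at key

lemma gl_ss_mem (I : TwoSidedIdeal A) (hI : IsClosed (I : Set A)) {b : A} (h : star b * b ∈ I) :
    b ∈ I := gl_key I hI h le_rfl

lemma gl_star_mem (I : TwoSidedIdeal A) (hI : IsClosed (I : Set A)) {b : A} (h : b ∈ I) :
    star b ∈ I := gl_ss_mem I hI (by rw [star_star]; exact I.mul_mem_right _ _ h)

lemma gl_her (I : TwoSidedIdeal A) (hI : IsClosed (I : Set A)) {x y : A} (hx : 0 ≤ x)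
    (h : x ≤ y) (hy : y ∈ I) : x ∈ I := by
  have : glS x ∈ I := gl_key I hI hy (by rw [glS_star, glS_sq x hx]; exact h)
  rw [← glS_sq x hx]; exact I.mul_mem_left _ _ this

lemma gl_her' (I : TwoSidedIdeal A) (hI : IsClosed (I : Set A)) {x y : A} {C : ℝ} (hx : 0 ≤ x)
    (h : x ≤ C • y) (hy : y ∈ I) : x ∈ I := gl_her I hI hx h (gl_smul_mem I C hy)

lemma gl_sq_mem (I : TwoSidedIdeal A) (hI : IsClosed (I : Set A)) {b : A} (hb : IsSelfAdjoint b)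
    (h : b * b ∈ I) : b ∈ I := gl_ss_mem I hI (by rwa [hb.star_eq])

end G1

section G2
open Filter Topology Set
set_option linter.unusedSectionVars false
set_option linter.unusedVariables false
variable {A : Type*} [CStarAlgebra A]

/-- maximal proper two-sided ideals -/
def GlMax (A : Type*) [CStarAlgebra A] : Type _ :=
  {I : TwoSidedIdeal A // (1 : A) ∉ I ∧ ∀ J : TwoSidedIdeal A, I ≤ J → (1 : A) ∉ J → J ≤ I}

lemma glMax_exists (I : TwoSidedIdeal A) (h : (1 : A) ∉ I) : ∃ M : GlMax A, I ≤ M.1 := by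
  obtain ⟨m, hm, hmax⟩ := zorn_le_nonempty₀ {J : TwoSidedIdeal A | (1 : A) ∉ J} (by
    intro c hc hch y hy
    have hdir : ∀ a ∈ c, ∀ b ∈ c, ∃ d ∈ c, a ≤ d ∧ b ≤ d := by
      intro a ha b hb
      rcases hch.total ha hb with h | h
      · exact ⟨b, hb, h, le_rfl⟩
      · exact ⟨a, ha, le_rfl, h⟩
    let U : TwoSidedIdeal A := TwoSidedIdeal.mk' {x | ∃ J ∈ c, x ∈ J}
      ⟨y, hy, y.zero_mem⟩
      (by
        rintro a b ⟨J, hJ, ha⟩ ⟨K, hK, hb⟩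
        obtain ⟨d, hd, h1, h2⟩ := hdir J hJ K hK
        exact ⟨d, hd, d.add_mem (h1 ha) (h2 hb)⟩)
      (by rintro a ⟨J, hJ, ha⟩; exact ⟨J, hJ, J.neg_mem ha⟩)
      (by rintro a b ⟨J, hJ, ha⟩; exact ⟨J, hJ, J.mul_mem_left _ _ ha⟩)
      (by rintro a b ⟨J, hJ, ha⟩; exact ⟨J, hJ, J.mul_mem_right _ _ ha⟩)
    have hU : ∀ x, x ∈ U ↔ ∃ J ∈ c, x ∈ J := by
      intro x
      simp only [U, TwoSidedIdeal.mem_mk']; rfl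
    refine ⟨U, ?_, fun z hz x hx => (hU x).2 ⟨z, hz, hx⟩⟩
    intro h1
    obtain ⟨J, hJ, h1⟩ := (hU 1).1 h1
    exact hc hJ h1) I h
  exact ⟨⟨m, hmax.prop, fun J hJ h1 => hmax.le_of_ge h1 hJ⟩, hm⟩

/-- closure of a two-sided ideal -/
def glCl (I : TwoSidedIdeal A) : TwoSidedIdeal A :=
  TwoSidedIdeal.mk' (closure (I : Set A)) (subset_closure I.zero_mem)
    (fun {x y} hx hy => map_mem_closure₂ continuous_add hx hy fun a ha b hb => I.add_mem ha hb)
    (fun {x} hx => map_mem_closure continuous_neg hx fun a ha => I.neg_mem ha)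
    (fun {x y} hy => map_mem_closure (f := fun z => x * z) (by fun_prop) hy
      fun a ha => I.mul_mem_left _ _ ha)
    (fun {x y} hy => map_mem_closure (f := fun z => z * y) (by fun_prop) hy
      fun a ha => I.mul_mem_right _ _ ha)

lemma glCl_mem (I : TwoSidedIdeal A) (x : A) : x ∈ glCl I ↔ x ∈ closure (I : Set A) := by
  simp only [glCl, TwoSidedIdeal.mem_mk']; 

lemma glMax_closed (M : GlMax A) : IsClosed (M.1 : Set A) := by
  have h1 : (1 : A) ∉ glCl M.1 := by
    rw [glCl_mem]
    intro h
    rw [mem_closure_iff] at h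
    obtain ⟨x, hx, hxM⟩ := h {a | IsUnit a} Units.isOpen isUnit_one
    obtain ⟨u, rfl⟩ := hx
    have := M.1.mul_mem_left (↑u⁻¹ : A) _ hxM
    rw [Units.inv_mul] at this
    exact M.2.1 this
  have h2 := M.2.2 (glCl M.1) (fun x hx => (glCl_mem _ _).2 (subset_closure hx)) h1
  refine isClosed_of_closure_subset fun x hx => h2 ((glCl_mem _ _).2 hx)

lemma glMax_gen (M : GlMax A) (a : A) (h : a ∉ M.1) (J : TwoSidedIdeal A) (hJ : M.1 ≤ J)
    (ha : a ∈ J) : (1 : A) ∈ J := by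
  by_contra h1
  exact h (M.2.2 J hJ h1 ha)

/-- primeness -/
lemma glMax_prime (M : GlMax A) (a b : A) (ha : a ∉ M.1) (hb : b ∉ M.1) :
    ∃ x, a * x * b ∉ M.1 := by
  by_contra! hcon
  -- J = {y | ∀ x, y * x * b ∈ M}
  let J : TwoSidedIdeal A := TwoSidedIdeal.mk' {y | ∀ x, y * x * b ∈ M.1}
    (by intro x; simp [M.1.zero_mem])
    (by intro y z hy hz x; rw [add_mul, add_mul]; exact M.1.add_mem (hy x) (hz x))
    (by intro y hy x; rw [neg_mul, neg_mul]; exact M.1.neg_mem (hy x))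
    (by intro y z hz x; rw [mul_assoc, mul_assoc y, ← mul_assoc z]; exact M.1.mul_mem_left _ _ (hz x))
    (by intro y z hy x; rw [mul_assoc y]; exact hy (z * x))
  have hJ : ∀ y, y ∈ J ↔ ∀ x, y * x * b ∈ M.1 := by
    intro y; simp only [J, TwoSidedIdeal.mem_mk']; rfl
  have h1 : (1 : A) ∈ J := glMax_gen M a ha J
    (fun y hy => (hJ y).2 fun x => M.1.mul_mem_right _ _ (M.1.mul_mem_right _ _ hy)) ((hJ a).2 hcon)
  have := (hJ 1).1 h1 1
  rw [one_mul, one_mul] at this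
  exact hb this

instance : TopologicalSpace (GlMax A) :=
  TopologicalSpace.generateFrom {U | ∃ y : A, U = {M : GlMax A | y ∉ M.1}}

lemma glMax_open (y : A) : IsOpen {M : GlMax A | y ∉ M.1} :=
  TopologicalSpace.isOpen_generateFrom_of_mem ⟨y, rfl⟩

instance : CompactSpace (GlMax A) := by
  constructor
  refine isCompact_generateFrom rfl ?_
  intro P hP hcov
  let Y : Set A := {y | {M : GlMax A | y ∉ M.1} ∈ P}
  have h1 : (1 : A) ∈ TwoSidedIdeal.span Y := by
    by_contra h
    obtain ⟨M, hM⟩ := glMax_exists _ h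
    obtain ⟨U, hU, hMU⟩ := hcov (mem_univ M)
    obtain ⟨y, rfl⟩ := hP hU
    exact hMU (hM (TwoSidedIdeal.subset_span hU))
  have h2 : ∀ x ∈ TwoSidedIdeal.span Y, ∃ F : Set A, F ⊆ Y ∧ F.Finite ∧ x ∈ TwoSidedIdeal.span F := by
    intro x hx
    induction hx using TwoSidedIdeal.span_induction with
    | mem x h => exact ⟨{x}, by simpa using h, finite_singleton x,
        TwoSidedIdeal.subset_span rfl⟩
    | zero => exact ⟨∅, by simp, finite_empty, TwoSidedIdeal.zero_mem _⟩
    | add x y _ _ h1 h2 =>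
      obtain ⟨F, hF, hf, hx⟩ := h1
      obtain ⟨G, hG, hg, hy⟩ := h2
      refine ⟨F ∪ G, union_subset hF hG, hf.union hg, TwoSidedIdeal.add_mem _
        (TwoSidedIdeal.span_mono subset_union_left hx) (TwoSidedIdeal.span_mono subset_union_right hy)⟩
    | neg x _ h => 
      obtain ⟨F, hF, hf, hx⟩ := h
      exact ⟨F, hF, hf, TwoSidedIdeal.neg_mem _ hx⟩
    | left_absorb a x _ h =>
      obtain ⟨F, hF, hf, hx⟩ := h
      exact ⟨F, hF, hf, TwoSidedIdeal.mul_mem_left _ _ _ hx⟩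
    | right_absorb a x _ h =>
      obtain ⟨F, hF, hf, hx⟩ := h
      exact ⟨F, hF, hf, TwoSidedIdeal.mul_mem_right _ _ _ hx⟩
  obtain ⟨F, hF, hf, h1F⟩ := h2 1 h1
  refine ⟨(fun y => {M : GlMax A | y ∉ M.1}) '' F, ?_, hf.image _, ?_⟩
  · rintro _ ⟨y, hy, rfl⟩; exact hF hy
  · intro M _
    by_contra hM
    have : F ⊆ M.1 := by
      intro y hy
      by_contra hyM
      exact hM ⟨_, ⟨y, hy, rfl⟩, hyM⟩
    exact M.2.1 (TwoSidedIdeal.span_le.2 this h1F)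

/-- compactness for a directed family -/
lemma gl_dirc (U : ℝ → Set (GlMax A)) (hU : ∀ ε, 0 < ε → IsOpen (U ε))
    (hmono : ∀ ε δ, 0 < δ → δ ≤ ε → U ε ⊆ U δ)
    (hcov : ∀ M, ∃ ε, 0 < ε ∧ M ∈ U ε) : ∃ ε, 0 < ε ∧ ∀ M, M ∈ U ε := by
  have := (isCompact_univ (X := GlMax A)).elim_directed_cover (fun n : ℕ => U (1 / ((n : ℝ) + 1)))
    (fun n => hU _ (by positivity)) (by
      intro M _
      obtain ⟨ε, hε, h⟩ := hcov M
      obtain ⟨n, hn⟩ := exists_nat_one_div_lt hε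
      exact mem_iUnion.2 ⟨n, hmono _ _ (by positivity) hn.le h⟩) (by
      intro m n
      refine ⟨max m n, hmono _ _ (by positivity) ?_, hmono _ _ (by positivity) ?_⟩
      · apply one_div_le_one_div_of_le (by positivity); simp
      · apply one_div_le_one_div_of_le (by positivity); simp)
  obtain ⟨n, hn⟩ := this
  exact ⟨_, by positivity, fun M => hn (mem_univ M)⟩

end G2

section G3
open Filter Topology Set
set_option linter.unusedSectionVars false
set_option linter.unusedVariables false
variable {A : Type*} [CStarAlgebra A]

noncomputable def glth (ε t : ℝ) : ℝ := max (t - ε) 0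
noncomputable def glka (ε t : ℝ) : ℝ := (max t ε)⁻¹

lemma glth_c (ε : ℝ) : Continuous (glth ε) := by unfold glth; fun_prop
lemma glka_c {ε : ℝ} (h : 0 < ε) : Continuous (glka ε) := by
  unfold glka
  exact Continuous.inv₀ (by fun_prop) fun t => (lt_max_of_lt_right h).ne'
lemma glkat_c {ε : ℝ} (h : 0 < ε) : Continuous (fun t => glka ε t * t) :=
  (glka_c h).mul continuous_id
lemma glth_nn (ε t : ℝ) : 0 ≤ glth ε t := le_max_right _ _
lemma glka_pos {ε : ℝ} (h : 0 < ε) (t : ℝ) : 0 < glka ε t :=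
  inv_pos.2 (lt_max_of_lt_right h)
lemma glka_th {ε : ℝ} (h : 0 < ε) (t : ℝ) : glka ε t * t * glth ε t = glth ε t := by
  unfold glka glth
  rcases le_total t ε with h1 | h1
  · rw [max_eq_right (by linarith : t - ε ≤ 0)]; simp
  · rw [max_eq_left h1, inv_mul_cancel₀ (by linarith), one_mul]

lemma gl_pert (hsr1 : Dense {a : A | IsUnit a}) (q p : A) (δ : ℝ) (hδ : 0 < δ) :
    ∃ ρ : A, ‖ρ‖ < δ ∧ IsUnit (1 + (q + ρ) * p) := by
  obtain ⟨q', hq', hqq⟩ := Metric.dense_iff.1 hsr1 q (δ/2) (by positivity)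
  obtain ⟨u, rfl⟩ := hqq
  have hc : ContinuousAt (fun t : A => Ring.inverse (t - p)) ((↑u⁻¹ : A) + p) := by
    refine ContinuousAt.comp (g := Ring.inverse) (f := fun t => t - p) ?_ (by fun_prop)
    simp only [add_sub_cancel_right]
    exact NormedRing.inverse_continuousAt u⁻¹
  have h1 : ∀ᶠ t in 𝓝 ((↑u⁻¹ : A) + p), ‖Ring.inverse (t - p) - u‖ < δ / 2 := by
    have := Metric.tendsto_nhds.1 hc (δ/2) (by positivity)
    simpa [dist_eq_norm] using this
  have h2 : ∀ᶠ t in 𝓝 ((↑u⁻¹ : A) + p), IsUnit (t - p) := by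
    have hc2 : ContinuousAt (fun t : A => t - p) ((↑u⁻¹ : A) + p) := by fun_prop
    exact hc2 (by simpa using Units.nhds u⁻¹)
  obtain ⟨t, ht3, ht1, ht2⟩ := hsr1.inter_nhds_nonempty (h1.and h2)
  obtain ⟨w, hw⟩ := ht3
  obtain ⟨v, hv⟩ := ht2
  refine ⟨Ring.inverse (t - p) - q, ?_, ?_⟩
  · have h3 : Ring.inverse (t - p) - q = (Ring.inverse (t - p) - u) + (u - q) := by abel
    rw [h3]
    have : ‖(u : A) - q‖ < δ/2 := by simpa [dist_eq_norm] using hq'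
    calc _ ≤ _ := norm_add_le _ _
      _ < δ := by linarith [ht1]
  · have h4 : 1 + (q + (Ring.inverse (t - p) - q)) * p = Ring.inverse (t - p) * t := by
      rw [add_sub_cancel]
      have : Ring.inverse (t - p) * (t - p) = 1 := Ring.inverse_mul_cancel _ ⟨v, hv⟩
      rw [← this]; noncomm_ring
    rw [h4, ← hv, Ring.inverse_unit, ← hw]
    exact v⁻¹.isUnit.mul w.isUnit

lemma gl_small (a : A) (h : ‖a‖ < 1) : IsUnit (1 + a) := by
  have := isUnit_one_sub_of_norm_lt_one (x := -a) (by simpa using h)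
  simpa using this

lemma gl_smallδ (a : A) : ∃ δ : ℝ, 0 < δ ∧ ∀ ρ : A, ‖ρ‖ < δ → ‖a‖ * ‖ρ‖ < 1 := by
  refine ⟨(‖a‖ + 1)⁻¹, by positivity, fun ρ h => ?_⟩
  have h1 : 0 < ‖a‖ + 1 := by positivity
  have := mul_lt_mul_of_pos_left h h1
  rw [mul_inv_cancel₀ h1.ne'] at this
  nlinarith [norm_nonneg ρ]

lemma gl_merge (hsr1 : Dense {a : A | IsUnit a}) (d1 d2 : A) (ε : ℝ) (hε : 0 < ε) :
    ∃ u v S : A, S = d2 + (d1 * u + d2 * v) * d1 ∧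
      (∃ α β, cfc (glth ε) (star d1 * d1) = α * S * β) ∧
      (∃ α β, cfc (glth ε) (star d2 * d2) = α * S * β) := by
  have hs1 : IsSelfAdjoint (star d1 * d1) := .star_mul_self d1
  have hs2 : IsSelfAdjoint (star d2 * d2) := .star_mul_self d2
  set K1 := cfc (glka ε) (star d1 * d1) * star d1 with hK1
  set K2 := cfc (glka ε) (star d2 * d2) * star d2 with hK2
  set e1 := cfc (glth ε) (star d1 * d1) with he1
  set e2 := cfc (glth ε) (star d2 * d2) with he2
  have p1 : K1 * d1 * e1 = e1 := by
    rw [hK1, he1, mul_assoc _ (star d1), gl_mid _ (glka_c hε) _ hs1,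
      gl_cm _ _ (glkat_c hε) (glth_c ε)]
    congr 1; funext t; exact glka_th hε t
  have p2 : e2 * (K2 * d2) = e2 := by
    rw [hK2, he2, mul_assoc _ (star d2), gl_mid _ (glka_c hε) _ hs2,
      gl_cm _ _ (glth_c ε) (glkat_c hε)]
    congr 1; funext t; rw [mul_comm]; exact glka_th hε t
  obtain ⟨δ, hδ, hsm⟩ := gl_smallδ (K1 * d2)
  obtain ⟨ρ, hρ, ⟨M, hM⟩⟩ := gl_pert hsr1 (K2 * d1 - 1) (K1 * d1) δ hδ
  obtain ⟨N, hN⟩ := gl_small (K1 * d2 * ρ) ((norm_mul_le _ _).trans_lt (hsm ρ hρ))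
  refine ⟨K1, (ρ - 1) * K1, _, rfl, ⟨↑N⁻¹ * K1, e1, ?_⟩, ⟨e2 * K2, ↑M⁻¹, ?_⟩⟩
  · have : K1 * (d2 + (d1 * K1 + d2 * ((ρ - 1) * K1)) * d1) * e1 = N * e1 := by
      rw [hN]
      have : K1 * (d2 + (d1 * K1 + d2 * ((ρ - 1) * K1)) * d1) * e1
        = K1 * d2 * e1 + (K1 * d1 + K1 * d2 * (ρ - 1)) * (K1 * d1 * e1) := by noncomm_ring
      rw [this, p1, add_mul (K1 * d1), p1]; noncomm_ring
    rw [mul_assoc (↑N⁻¹ : A), mul_assoc (↑N⁻¹ : A), this, Units.inv_mul_cancel_left]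
  · have : e2 * K2 * (d2 + (d1 * K1 + d2 * ((ρ - 1) * K1)) * d1) = e2 * M := by
      rw [hM]
      have : e2 * K2 * (d2 + (d1 * K1 + d2 * ((ρ - 1) * K1)) * d1)
        = (e2 * (K2 * d2)) * (1 + (ρ - 1) * (K1 * d1)) + e2 * (K2 * d1 * K1 * d1) := by noncomm_ring
      rw [this, p2]; noncomm_ring
    rw [this, Units.mul_inv_cancel_right]

lemma gl_W (hsr1 : Dense {a : A | IsUnit a}) (S : A) (ε : ℝ) (hε : 0 < ε) :
    ∃ W : Aˣ, (W : A) * cfc (glth ε) (star S * S) = S * cfc (glth ε) (star S * S) ∧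
      ∀ k, S * k = 0 → star S * k = 0 → (W : A) * k = k := by
  have hs1 : IsSelfAdjoint (star S * S) := .star_mul_self S
  set K := cfc (glka ε) (star S * S) * star S with hK
  set e := cfc (glth ε) (star S * S) with he
  have p1 : K * S * e = e := by
    rw [hK, he, mul_assoc _ (star S), gl_mid _ (glka_c hε) _ hs1,
      gl_cm _ _ (glkat_c hε) (glth_c ε)]
    congr 1; funext t; exact glka_th hε t
  obtain ⟨δ, hδ, hsm⟩ := gl_smallδ K
  obtain ⟨ρ, hρ, ⟨Z, hZ⟩⟩ := gl_pert hsr1 (S - 1) (K * S) δ hδ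
  obtain ⟨N, hN⟩ := gl_small (ρ * K) ((norm_mul_le _ _).trans_lt (by
    rw [mul_comm]; exact hsm ρ hρ))
  refine ⟨N⁻¹ * Z, ?_, fun k h1 h2 => ?_⟩
  · rw [Units.val_mul, mul_assoc, Units.inv_mul_eq_iff_eq_mul, hN, hZ]
    have a1 : (1 + (S - 1 + ρ) * (K * S)) * e = e + (S - 1 + ρ) * (K * S * e) := by noncomm_ring
    have a2 : (1 + ρ * K) * (S * e) = S * e + ρ * (K * S * e) := by noncomm_ring
    rw [a1, a2, p1]; noncomm_ring
  · rw [Units.val_mul, mul_assoc, Units.inv_mul_eq_iff_eq_mul, hN, hZ]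
    have a1 : (1 + (S - 1 + ρ) * (K * S)) * k = k + (S - 1 + ρ) * K * (S * k) := by noncomm_ring
    have a2 : (1 + ρ * K) * k = k + ρ * cfc (glka ε) (star S * S) * (star S * k) := by
      rw [hK]; noncomm_ring
    rw [a1, a2, h1, h2]; simp

end G3

section G4
open Filter Topology Set
set_option linter.unusedSectionVars false
set_option linter.unusedVariables false
variable {A : Type*} [CStarAlgebra A]

noncomputable def glb (i : ℕ) (t : ℝ) : ℝ := max 0 (1 / 2 - |t - (i + 1)|)

lemma glb_c (i : ℕ) : Continuous (glb i) := by unfold glb; fun_prop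
lemma glb_nn (i : ℕ) (t : ℝ) : 0 ≤ glb i t := le_max_left _ _
lemma glb_low (i : ℕ) (t : ℝ) (h : t ≤ 1 / 2) : glb i t = 0 := by
  unfold glb
  refine max_eq_left ?_
  have := neg_abs_le (t - (i + 1))
  have hi : (0 : ℝ) ≤ i := by positivity
  linarith
lemma glb_le (i : ℕ) (t : ℝ) (h : 0 ≤ t) : glb i t ≤ t := by
  rcases le_total t (1/2) with h1 | h1
  · rw [glb_low i t h1]; exact h
  · unfold glb; exact max_le h (by linarith [abs_nonneg (t - (i + 1))])
lemma glb_orth (i j : ℕ) (h : i ≠ j) (t : ℝ) : glb i t * glb j t = 0 := by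
  unfold glb
  by_contra hne
  have h1 : 0 < 1 / 2 - |t - (i + 1)| := by
    by_contra hc; exact hne (by rw [max_eq_left (not_lt.1 hc), zero_mul])
  have h2 : 0 < 1 / 2 - |t - (j + 1)| := by
    by_contra hc; exact hne (by rw [max_eq_left (b := 1 / 2 - |t - (j + 1)|) (not_lt.1 hc), mul_zero])
  have h3 : |((i : ℝ) - j)| < 1 := by
    have : (i : ℝ) - j = (t - (j + 1)) - (t - (i + 1)) := by ring
    rw [this]
    refine (abs_sub _ _).trans_lt ?_
    linarith
  have h4 : |(i : ℤ) - j| < 1 := by exact_mod_cast h3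
  rw [Int.abs_lt_one_iff] at h4
  omega
lemma glb_pt (i : ℕ) : glb i ((i : ℝ) + 1) = 1 / 2 := by unfold glb; norm_num
lemma glb_ka (i : ℕ) (t : ℝ) : glka (1/2) t * (t * glb i t) = glb i t := by
  unfold glka
  rcases le_total t (1/2) with h1 | h1
  · rw [glb_low i t h1]; simp
  · rw [max_eq_left h1, ← mul_assoc, inv_mul_cancel₀ (by linarith), one_mul]

lemma gl_cont_nmem (M : GlMax A) (z : A) (hz : IsSelfAdjoint z) (f : ℝ → ℝ) (hf : Continuous f)
    (h : cfc f z ∉ M.1) : ∃ δ > 0, ∀ z' : A, IsSelfAdjoint z' → ‖z' - z‖ < δ → cfc f z' ∉ M.1 := by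
  have hsp : ∀ x : A, ‖x‖ ≤ ‖z‖ + 1 → spectrum ℝ x ⊆ Icc (-((‖z‖+1)*‖(1:A)‖)) ((‖z‖+1)*‖(1:A)‖) := by
    intro x hx t ht
    have := spectrum.norm_le_norm_mul_of_mem ht
    rw [Real.norm_eq_abs] at this
    exact abs_le.1 (this.trans (by gcongr))
  have hT : Tendsto (fun x : A => cfc f x) (𝓝[{x | IsSelfAdjoint x}] z) (𝓝 (cfc f z)) := by
    refine Filter.Tendsto.cfc (𝕜 := ℝ) isCompact_Icc f
      (tendsto_id.mono_left nhdsWithin_le_nhds) ?_ self_mem_nhdsWithin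
      (hsp z (by linarith)) hz hf.continuousOn
    refine Filter.Eventually.filter_mono nhdsWithin_le_nhds ?_
    have : ∀ᶠ x in 𝓝 z, ‖x‖ < ‖z‖ + 1 := continuous_norm.continuousAt.eventually_lt
      continuousAt_const (by linarith)
    exact this.mono fun x hx => hsp x hx.le
  have hev := hT.eventually ((glMax_closed M).isOpen_compl.mem_nhds h)
  rw [eventually_nhdsWithin_iff, Metric.eventually_nhds_iff] at hev
  obtain ⟨δ, hδ, hh⟩ := hev
  exact ⟨δ, hδ, fun z' h1 h2 => hh (by rwa [dist_eq_norm]) h1⟩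

lemma gl_cont_nmem' (M : GlMax A) (z : A) (hz : IsSelfAdjoint z) (f : ℕ → ℝ → ℝ)
    (hf : ∀ i, Continuous (f i)) (m : ℕ)
    (h : ∀ i < m, cfc (f i) z ∉ M.1) :
    ∃ δ > 0, ∀ z' : A, IsSelfAdjoint z' → ‖z' - z‖ < δ → ∀ i < m, cfc (f i) z' ∉ M.1 := by
  induction m with
  | zero => exact ⟨1, one_pos, by simp⟩
  | succ m ih =>
    obtain ⟨δ1, h1, h1'⟩ := ih fun i hi => h i (by omega)
    obtain ⟨δ2, h2, h2'⟩ := gl_cont_nmem M z hz (f m) (hf m) (h m (by omega))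
    refine ⟨min δ1 δ2, lt_min h1 h2, fun z' hs hz' i hi => ?_⟩
    rcases Nat.lt_succ_iff_lt_or_eq.1 hi with h | rfl
    · exact h1' z' hs (hz'.trans_le (min_le_left _ _)) i h
    · exact h2' z' hs (hz'.trans_le (min_le_right _ _))

variable [PartialOrder A] [StarOrderedRing A]

lemma gl_smul_mono {x : A} (hx : 0 ≤ x) {c d : ℝ} (h : c ≤ d) : c • x ≤ d • x :=
  smul_le_smul_of_nonneg_right h hx

lemma gl_apx {z n : A} {C : ℝ} (hz : 0 ≤ z) (hn : 0 ≤ n) (h : z ≤ C • n) (η : ℝ) (hη : 0 < η) :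
    ∃ ε > 0, ∀ g : ℝ → ℝ, Continuous g → (∀ t, 0 ≤ t → (1 - g t) * t * (1 - g t) ≤ ε) →
      ‖glS z * (1 - cfc g n)‖ < η := by
  refine ⟨η ^ 2 / (2 * (|C| + 1)), by positivity, fun g hg hb => ?_⟩
  set ε := η ^ 2 / (2 * (|C| + 1)) with hε
  have hε0 : 0 < ε := by positivity
  have hns := gl_sa hn
  rw [gl_one_sub g hg n hns]
  set q := cfc (fun t => 1 - g t) n with hq
  have e0 : z ≤ |C| • n := h.trans (gl_smul_mono hn (le_abs_self C))
  have e2 : star (glS z * q) * (glS z * q) ≤ |C| • (q * n * q) := by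
    have := gl_conj_mono e0 q
    rw [hq, gl_star] at this
    rw [star_mul, hq, gl_star, glS_star]
    have e : cfc (fun t => 1 - g t) n * glS z * (glS z * cfc (fun t => 1 - g t) n)
      = cfc (fun t => 1 - g t) n * (glS z * glS z) * cfc (fun t => 1 - g t) n := by noncomm_ring
    rw [e, glS_sq z hz]
    simpa using this
  have e3 : ‖q * n * q‖ ≤ ε := by
    rw [hq, gl_mid _ (by fun_prop) n hns, gl_cm _ _ (by fun_prop) (by fun_prop)]
    refine gl_norm _ _ hn ε hε0.le fun t ht => ?_
    rw [abs_of_nonneg]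
    · exact hb t ht
    · have : (1 - g t) * t * (1 - g t) = (1 - g t)^2 * t := by ring
      rw [this]; positivity
  have e4 := CStarAlgebra.norm_le_norm_of_nonneg_of_le (gl_ss (glS z * q)) e2
  rw [CStarRing.norm_star_mul_self, norm_smul, Real.norm_eq_abs, abs_abs] at e4
  have e5 : |C| * ‖q * n * q‖ < η ^ 2 := by
    calc _ ≤ |C| * ε := by gcongr
      _ ≤ (|C| + 1) * ε := by nlinarith
      _ = η ^ 2 / 2 := by rw [hε]; field_simp
      _ < η ^ 2 := by nlinarith [sq_pos_of_pos hη]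
  nlinarith [norm_nonneg (glS z * q)]

lemma gl_apxp {ε : ℝ} (hε : 0 < ε) (t : ℝ) (ht : 0 ≤ t) :
    (1 - glka ε t * t) * t * (1 - glka ε t * t) ≤ ε := by
  unfold glka
  rcases le_total t ε with h | h
  · rw [max_eq_right h]
    have a1 : 0 ≤ ε⁻¹ * t := by positivity
    have a2 : ε⁻¹ * t ≤ 1 := by rw [inv_mul_le_iff₀ hε]; linarith
    have : (1 - ε⁻¹ * t) * t * (1 - ε⁻¹ * t) = (1 - ε⁻¹ * t)^2 * t := by ring
    rw [this]
    calc _ ≤ 1 * t := by gcongr; nlinarith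
      _ ≤ ε := by linarith
  · rw [max_eq_left h, inv_mul_cancel₀ (by linarith)]; simpa using hε.le

/-- the local condition -/
def GlQ (m : ℕ) (d : A) (M : GlMax A) : Prop :=
  ∃ z : A, 0 ≤ z ∧ (∃ C : ℝ, z ≤ C • (star d * d)) ∧ ∀ i < m, cfc (glb i) z ∉ M.1

lemma glQ_open (m : ℕ) (d : A) : IsOpen {M : GlMax A | GlQ m d M} := by
  have : {M : GlMax A | GlQ m d M} = ⋃ z : {z : A // 0 ≤ z ∧ ∃ C : ℝ, z ≤ C • (star d * d)},
      ⋂ i ∈ Finset.range m, {M : GlMax A | cfc (glb i) z.1 ∉ M.1} := by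
    ext M
    simp only [mem_ofPred_eq, mem_iUnion, mem_iInter, Finset.mem_range]
    constructor
    · rintro ⟨z, h1, h2, h3⟩; exact ⟨⟨z, h1, h2⟩, h3⟩
    · rintro ⟨⟨z, h1, h2⟩, h3⟩; exact ⟨z, h1, h2, h3⟩
  rw [this]
  exact isOpen_iUnion fun z => isOpen_biInter_finset fun i _ => glMax_open _

lemma glQ_mono {m : ℕ} {d d' : A} {M : GlMax A} {C : ℝ} (h : star d * d ≤ C • (star d' * d'))
    (hQ : GlQ m d M) : GlQ m d' M := by
  obtain ⟨z, h1, ⟨C', h2⟩, h3⟩ := hQ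
  refine ⟨z, h1, ⟨|C'| * C, ?_⟩, h3⟩
  calc z ≤ C' • (star d * d) := h2
    _ ≤ |C'| • (star d * d) := gl_smul_mono (gl_ss d) (le_abs_self _)
    _ ≤ |C'| • C • (star d' * d') := smul_le_smul_of_nonneg_left h (abs_nonneg _)
    _ = _ := by rw [smul_smul]

lemma glQ_le {m l : ℕ} {d : A} {M : GlMax A} (h : l ≤ m) (hQ : GlQ m d M) : GlQ l d M := by
  obtain ⟨z, h1, h2, h3⟩ := hQ
  exact ⟨z, h1, h2, fun i hi => h3 i (by omega)⟩

lemma gl_bump_orth (z : A) (i j : ℕ) (h : i ≠ j) : cfc (glb i) z * cfc (glb j) z = 0 := by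
  rw [gl_cm _ _ (glb_c i) (glb_c j)]
  exact gl_zero _ _ fun t => glb_orth i j h t

lemma gl_bump_le (z : A) (hz : 0 ≤ z) (i : ℕ) : cfc (glb i) z ≤ z := by
  have := gl_le_smul (glb i) (glb_c i) z hz 1 (fun t ht => by rw [one_mul]; exact glb_le i t ht)
  simpa using this

lemma glQ_toOrth {m : ℕ} {d : A} {M : GlMax A} (hQ : GlQ m d M) :
    ∃ (a : ℕ → A) (C : ℝ), (∀ i, 0 ≤ a i) ∧ (∀ i j, i ≠ j → a i * a j = 0) ∧
      (∀ i, a i ≤ C • (star d * d)) ∧ ∀ i < m, a i ∉ M.1 := by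
  obtain ⟨z, h1, ⟨C, h2⟩, h3⟩ := hQ
  exact ⟨fun i => cfc (glb i) z, C, fun i => gl_nn' _ _ (glb_nn i),
    fun i j h => gl_bump_orth z i j h, fun i => (gl_bump_le z h1 i).trans h2, h3⟩

lemma gl_th_nmem (M : GlMax A) (a : A) (ha : 0 ≤ a) (h : a ∉ M.1) :
    ∃ δ > 0, cfc (glth δ) a ∉ M.1 := by
  by_contra! hcon
  apply h
  rw [← SetLike.mem_coe, ← (glMax_closed M).closure_eq, Metric.mem_closure_iff]
  intro ε hε
  refine ⟨_, hcon (ε/2) (by positivity), ?_⟩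
  rw [dist_eq_norm]
  have : a - cfc (glth (ε/2)) a = cfc (fun t => t - glth (ε/2) t) a := by
    rw [← gl_sub (fun t => t) _ continuous_id (glth_c _), gl_id a (gl_sa ha)]
  rw [this]
  refine (gl_norm _ _ ha (ε/2) (by positivity) fun t ht => ?_).trans_lt (by linarith)
  unfold glth
  rw [abs_le]
  constructor
  · rcases max_cases (t - ε/2) 0 with h | h <;> linarith
  · rcases max_cases (t - ε/2) 0 with h | h <;> linarith

lemma gl_th_anti {ε δ : ℝ} (h : δ ≤ ε) (t : ℝ) : glth ε t ≤ glth δ t := by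
  unfold glth; gcongr

lemma gl_th_mono (M : GlMax A) (a : A) (ha : 0 ≤ a) {ε δ : ℝ} (hδ : δ ≤ ε)
    (h : cfc (glth ε) a ∉ M.1) : cfc (glth δ) a ∉ M.1 := fun h' =>
  h (gl_her M.1 (glMax_closed M) (gl_nn' _ _ (glth_nn ε))
    (gl_mono _ _ (glth_c _) (glth_c _) a ha fun t _ => gl_th_anti hδ t) h')

lemma gl_ka_le {δ : ℝ} (hδ : 0 < δ) (t : ℝ) : glka δ t ≤ δ⁻¹ :=
  inv_anti₀ hδ (le_max_right _ _)

lemma glQ_ofOrth {m : ℕ} {d : A} {M : GlMax A} (a : ℕ → A) (C : ℕ → ℝ)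
    (h0 : ∀ i < m, 0 ≤ a i) (h1 : ∀ i < m, ∀ j < m, i ≠ j → a i * a j = 0)
    (h2 : ∀ i < m, a i ≤ C i • (star d * d)) (h3 : ∀ i < m, a i ∉ M.1) : GlQ m d M := by
  have : ∀ i, ∃ δ > 0, i < m → cfc (glth δ) (a i) ∉ M.1 := by
    intro i
    by_cases hi : i < m
    · obtain ⟨δ, hδ, h⟩ := gl_th_nmem M (a i) (h0 i hi) (h3 i hi)
      exact ⟨δ, hδ, fun _ => h⟩
    · exact ⟨1, one_pos, fun h => absurd h hi⟩
  choose δ hδ hth using this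
  set z := ∑ i ∈ Finset.range m, ((i : ℝ) + 1) • cfc (fun t => glka (δ i) t * t) (a i) with hz
  have hz0 : 0 ≤ z := Finset.sum_nonneg fun i hi => smul_nonneg (by positivity)
    (gl_nn _ _ (h0 i (Finset.mem_range.1 hi)) fun t ht => mul_nonneg (glka_pos (hδ i) t).le ht)
  refine ⟨z, hz0, ⟨∑ i ∈ Finset.range m, ((i : ℝ) + 1) * ((δ i)⁻¹ * C i), ?_⟩, ?_⟩
  · rw [hz, Finset.sum_smul]
    refine Finset.sum_le_sum fun i hi => ?_
    have hi' := Finset.mem_range.1 hi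
    rw [← smul_smul, ← smul_smul]
    refine smul_le_smul_of_nonneg_left ?_ (by positivity)
    calc _ ≤ (δ i)⁻¹ • a i := gl_le_smul _ (glkat_c (hδ i)) _ (h0 i hi') _ fun t ht => by
            gcongr; exact gl_ka_le (hδ i) t
      _ ≤ _ := smul_le_smul_of_nonneg_left (h2 i hi') (inv_nonneg.2 (hδ i).le)
  · intro i hi hmem
    have hzi : z * cfc (glth (δ i)) (a i) = ((i : ℝ) + 1) • cfc (glth (δ i)) (a i) := by
      rw [hz, Finset.sum_mul, Finset.sum_eq_single i]
      · rw [smul_mul_assoc, gl_cm _ _ (glkat_c (hδ i)) (glth_c _)]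
        congr 2; funext t; exact glka_th (hδ i) t
      · intro j hj hji
        have hj' := Finset.mem_range.1 hj
        have e1 : a j * cfc (glth (δ i)) (a i) = 0 := by
          have := gl_ann (a i) (a j) (gl_sa (h0 i hi)) (h1 i hi j hj' hji.symm) (glth (δ i)) (glth_c _)
          have h00 : glth (δ i) 0 = 0 := by
            unfold glth; exact max_eq_right (by linarith [hδ i])
          rw [h00, zero_smul] at this
          have := congrArg star this
          rwa [star_mul, gl_star, (gl_sa (h0 j hj')).star_eq, star_zero] at this
        rw [smul_mul_assoc, gl_ann (a j) _ (gl_sa (h0 j hj')) e1 _ (glkat_c (hδ j))]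
        simp
      · intro h; exact absurd (Finset.mem_range.2 hi) h
    have := gl_eig M.1 (glMax_closed M) z (cfc (glth (δ i)) (a i)) ((i:ℝ) + 1) (gl_sa hz0)
      (by rw [hzi, sub_self]; exact M.1.zero_mem) (glb i) (glb_c i)
    rw [glb_pt] at this
    have h5 := M.1.sub_mem (M.1.mul_mem_right _ (cfc (glth (δ i)) (a i)) hmem) this
    rw [sub_sub_cancel] at h5
    have h6 := gl_smul_mem M.1 2 h5
    rw [smul_smul] at h6
    norm_num at h6
    exact hth i hi h6

lemma glQ_one_iff {d : A} {M : GlMax A} : GlQ 1 d M ↔ d ∉ M.1 := by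
  constructor
  · intro h hd
    obtain ⟨a, C, h0, _, h2, h3⟩ := glQ_toOrth h
    exact h3 0 one_pos (gl_her' M.1 (glMax_closed M) (h0 0) (h2 0) (M.1.mul_mem_left _ _ hd))
  · intro h
    refine glQ_ofOrth (fun _ => star d * d) (fun _ => 1) (fun _ _ => gl_ss d) ?_ (by simp) ?_
    · intro i hi j hj h; omega
    · intro i _ h'; exact h (gl_ss_mem M.1 (glMax_closed M) h')

lemma glQ_cut {m : ℕ} {d : A} {M : GlMax A} (hQ : GlQ m d M) :
    ∃ ε > 0, GlQ m (cfc (glth ε) (star d * d)) M := by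
  obtain ⟨z, h1, ⟨C, h2⟩, h3⟩ := hQ
  set n := star d * d with hn
  have hn0 : 0 ≤ n := gl_ss d
  have hns := gl_sa hn0
  obtain ⟨δ, hδ, hh⟩ := gl_cont_nmem' M z (gl_sa h1) glb glb_c m h3
  set b := glS z with hb
  obtain ⟨ε, hε, hap⟩ := gl_apx h1 hn0 h2 (δ / (2 * ‖b‖ + 1)) (by positivity)
  have hψc : Continuous (fun t => glka ε t * glth ε t) := (glka_c hε).mul (glth_c ε)
  have hap := hap (fun t => glka ε t * glth ε t) hψc (by
    intro t ht
    unfold glka glth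
    rcases le_total t ε with h | h
    · rw [max_eq_right (by linarith : t - ε ≤ 0)]; simpa using h
    · have ht0 : 0 < t := by linarith
      rw [max_eq_left h, max_eq_left (by linarith : 0 ≤ t - ε)]
      have e : (1 - t⁻¹ * (t - ε)) * t * (1 - t⁻¹ * (t - ε)) = ε * (ε / t) := by field_simp; ring
      rw [e]
      have : ε / t ≤ 1 := by rw [div_le_one ht0]; exact h
      nlinarith)
  set ψ := cfc (fun t => glka ε t * glth ε t) n with hψ
  have hψs : star ψ = ψ := gl_star _ _
  have hψn : ‖ψ‖ ≤ 1 := gl_norm _ _ hn0 1 zero_le_one fun t ht => by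
    unfold glka glth
    rcases le_total t ε with h | h
    · rw [max_eq_right (by linarith : t - ε ≤ 0)]; simp
    · have ht0 : 0 < t := by linarith
      rw [max_eq_left h, max_eq_left (by linarith : 0 ≤ t - ε), abs_of_nonneg (mul_nonneg (by positivity) (by linarith)),
        inv_mul_le_iff₀ ht0]; linarith
  refine ⟨ε, hε, ψ * z * ψ, ?_, ⟨|C| * ε⁻¹, ?_⟩, hh _ ?_ ?_⟩
  · have := gl_conj_nn h1 ψ; rwa [hψs] at this
  · have e1 := gl_conj_mono (h2.trans (gl_smul_mono hn0 (le_abs_self C))) ψ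
    rw [hψs] at e1
    refine e1.trans ?_
    rw [gl_star, mul_smul_comm, smul_mul_assoc, ← smul_smul]
    refine smul_le_smul_of_nonneg_left ?_ (abs_nonneg _)
    rw [hψ, gl_mid _ hψc n hns, gl_cm _ _ (by exact hψc.mul continuous_id) hψc, gl_cm _ _ (glth_c _) (glth_c _),
      gl_smul _ _ (by exact (glth_c _).mul (glth_c _))]
    refine gl_mono _ _ ((hψc.mul continuous_id).mul hψc) (continuous_const.mul ((glth_c _).mul (glth_c _))) n hn0 fun t ht => ?_
    have e2 : glka ε t * glth ε t * t * (glka ε t * glth ε t)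
      = (glka ε t * t * glth ε t) * glth ε t * glka ε t := by ring
    change glka ε t * glth ε t * t * (glka ε t * glth ε t) ≤ ε⁻¹ * (glth ε t * glth ε t)
    rw [e2, glka_th hε, mul_comm]
    gcongr
    · exact mul_nonneg (glth_nn _ _) (glth_nn _ _)
    · exact gl_ka_le hε t
  · have := gl_conj_nn h1 ψ; rw [hψs] at this; exact gl_sa this
  · have e1 : ψ * z * ψ - z = -((star (b * (1 - ψ))) * (b * ψ)) - b * (b * (1 - ψ)) := by
      rw [star_mul, star_sub, hψs, star_one, hb, glS_star]
      have : ψ * z * ψ - z = ψ * (glS z * glS z) * ψ - glS z * glS z := by rw [glS_sq z h1]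
      rw [this]; noncomm_ring
    rw [e1]
    have e2 : ‖b * (1 - ψ)‖ * (2 * ‖b‖ + 1) < δ := by rwa [lt_div_iff₀ (by positivity)] at hap
    calc _ ≤ ‖-((star (b * (1 - ψ))) * (b * ψ))‖ + ‖b * (b * (1 - ψ))‖ := norm_sub_le _ _
      _ ≤ ‖b * (1 - ψ)‖ * (‖b‖ * 1) + ‖b‖ * ‖b * (1 - ψ)‖ := by
        gcongr
        · rw [norm_neg]
          refine (norm_mul_le _ _).trans ?_
          rw [norm_star]
          gcongr
          exact (norm_mul_le _ _).trans (by gcongr)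
        · exact norm_mul_le _ _
      _ ≤ ‖b * (1 - ψ)‖ * (2 * ‖b‖ + 1) := by nlinarith [norm_nonneg (b * (1 - ψ))]
      _ < δ := e2

lemma glQ_cut_mono {m : ℕ} {n : A} {M : GlMax A} (hn : 0 ≤ n) {ε δ : ℝ} (h : δ ≤ ε)
    (hQ : GlQ m (cfc (glth ε) n) M) : GlQ m (cfc (glth δ) n) M := by
  refine glQ_mono (C := 1) ?_ hQ
  rw [one_smul, gl_star, gl_star, gl_cm _ _ (glth_c _) (glth_c _), gl_cm _ _ (glth_c _) (glth_c _)]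
  refine gl_mono _ _ ((glth_c _).mul (glth_c _)) ((glth_c _).mul (glth_c _)) n hn fun t _ => ?_
  exact mul_le_mul (gl_th_anti h t) (gl_th_anti h t) (glth_nn _ _) (glth_nn _ _)

lemma gl_smul_alg (c : ℝ) (x : A) : star x * algebraMap ℝ A c * x = c • (star x * x) := by
  rw [← Algebra.commutes, mul_assoc, Algebra.smul_def]

lemma gl_ss_mul_le (a x : A) : star (a * x) * (a * x) ≤ (‖a‖ ^ 2) • (star x * x) := by
  have := gl_conj_mono (CStarAlgebra.star_mul_le_algebraMap_norm_sq (a := a)) x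
  rw [gl_smul_alg] at this
  convert this using 1
  rw [star_mul]; noncomm_ring

lemma glQ_transport {m : ℕ} {α S β : A} {M : GlMax A} (hQ : GlQ m (α * S * β) M) : GlQ m S M := by
  have hQ2 : GlQ m (S * β) M := by
    refine glQ_mono (C := ‖α‖ ^ 2) ?_ hQ
    rw [mul_assoc]; exact gl_ss_mul_le α (S * β)
  obtain ⟨z, h1, ⟨C, h2⟩, h3⟩ := hQ2
  set n := star (S * β) * (S * β) with hn
  have hn0 : 0 ≤ n := gl_ss _
  have hns := gl_sa hn0
  obtain ⟨δ, hδ, hh⟩ := gl_cont_nmem' M z (gl_sa h1) glb glb_c m h3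
  set b := glS z with hb
  obtain ⟨ε, hε, hap⟩ := gl_apx h1 hn0 h2 (δ / (‖b‖ + 1)) (by positivity)
  have hap := hap _ (glkat_c hε) (gl_apxp hε)
  set p := cfc (fun t => glka ε t * t) n with hp
  have hrc : Continuous fun t => Real.sqrt (glka ε t) := (glka_c hε).sqrt
  set r := cfc (fun t => Real.sqrt (glka ε t)) n with hr
  have hrs : star r = r := gl_star _ _
  have hrp : r * n * r = p := by
    rw [hr, gl_mid _ hrc n hns, gl_cm _ _ (by exact hrc.mul continuous_id) hrc, hp]
    congr 1; funext t
    have := Real.mul_self_sqrt (glka_pos hε t).le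
    calc _ = (Real.sqrt (glka ε t) * Real.sqrt (glka ε t)) * t := by ring
      _ = _ := by rw [this]
  set P := glS (star S * S) with hP
  have hPs : star P = P := glS_star _
  have hPP : P * P = star S * S := glS_sq _ (gl_ss S)
  have hbs : star b = b := glS_star _
  set X := P * (β * r * b) with hX
  have hXX : star X * X = b * p * b := by
    have : star X * X = b * (r * (star β * (P * P) * β) * r) * b := by
      rw [hX]; simp only [star_mul, hPs, hbs, hrs]; noncomm_ring
    rw [this, hPP, ← hrp, hn, star_mul]; noncomm_ring
  have hfX : ∀ i < m, cfc (glb i) (star X * X) ∉ M.1 := by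
    refine hh _ (.star_mul_self X) ?_
    have e1 : star X * X - z = - (b * (1 - p) * b) := by
      rw [hXX, ← glS_sq z h1]; noncomm_ring
    rw [e1, norm_neg]
    rw [lt_div_iff₀ (by positivity)] at hap
    calc _ ≤ ‖b * (1 - p)‖ * ‖b‖ := norm_mul_le _ _
      _ ≤ ‖b * (1 - p)‖ * (‖b‖ + 1) := by gcongr; linarith
      _ < δ := hap
  refine ⟨X * star X, mul_star_self_nonneg X, ⟨‖star (β * r * b)‖ ^ 2, ?_⟩, fun i hi hmem => ?_⟩
  · have := gl_ss_mul_le (star (β * r * b)) P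
    rw [hPs, hPP] at this
    convert this using 1
    rw [hX]; simp only [star_mul, hPs, hbs, hrs, star_star]
  · apply hfX i hi
    have e1 : cfc (glb i) (X * star X) * X ∈ M.1 := M.1.mul_mem_right _ _ hmem
    rw [gl_swap _ _ (glb_c i)] at e1
    have e2 := M.1.mul_mem_left (cfc (glka (1/2)) (star X * X) * star X) _ e1
    have e3 : cfc (glka (1/2)) (star X * X) * star X * (X * cfc (glb i) (star X * X))
        = cfc (glb i) (star X * X) := by
      have : cfc (glka (1/2)) (star X * X) * star X * (X * cfc (glb i) (star X * X))
        = cfc (glka (1/2)) (star X * X) * ((star X * X) * cfc (glb i) (star X * X)) := by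
        noncomm_ring
      rw [this, gl_idm _ (glb_c i) _ (.star_mul_self X), gl_cm _ _ (by exact glka_c (by norm_num))
        (by exact continuous_id.mul (glb_c i))]
      congr 1; funext t; exact glb_ka i t
    rwa [e3] at e2

end G4

section G5
open Filter Topology Set
set_option linter.unusedSectionVars false
set_option linter.unusedVariables false
variable {A : Type*} [CStarAlgebra A] [PartialOrder A] [StarOrderedRing A]

lemma gl_pairstep (hsr1 : Dense {a : A | IsUnit a}) (m : ℕ) (d1 d2 : A) (V : Set (GlMax A))
    (hV : IsOpen V) (h : ∀ M, M ∈ V ∨ GlQ m d1 M ∨ GlQ m d2 M) :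
    ∃ u v, ∀ M, M ∈ V ∨ GlQ m (d2 + (d1 * u + d2 * v) * d1) M := by
  obtain ⟨ε, hε, hall⟩ := gl_dirc (fun ε => V ∪ ({M | GlQ m (cfc (glth ε) (star d1 * d1)) M} ∪
      {M | GlQ m (cfc (glth ε) (star d2 * d2)) M}))
    (fun ε _ => hV.union ((glQ_open _ _).union (glQ_open _ _)))
    (fun ε δ _ hd => union_subset_union_right V (union_subset_union
      (fun M hM => glQ_cut_mono (gl_ss d1) hd hM) (fun M hM => glQ_cut_mono (gl_ss d2) hd hM)))
    (fun M => by
      rcases h M with h | h | h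
      · exact ⟨1, one_pos, Or.inl h⟩
      · obtain ⟨ε, hε, hQ⟩ := glQ_cut h
        exact ⟨ε, hε, Or.inr (Or.inl hQ)⟩
      · obtain ⟨ε, hε, hQ⟩ := glQ_cut h
        exact ⟨ε, hε, Or.inr (Or.inr hQ)⟩)
  obtain ⟨u, v, S, hS, ⟨α, β, h1⟩, ⟨α', β', h2⟩⟩ := gl_merge hsr1 d1 d2 ε hε
  refine ⟨u, v, fun M => ?_⟩
  rw [← hS]
  rcases hall M with h | h | h
  · exact Or.inl h
  · right; rw [mem_ofPred_eq, h1] at h; exact glQ_transport h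
  · right; rw [mem_ofPred_eq, h2] at h; exact glQ_transport h

lemma gl_family (hsr1 : Dense {a : A | IsUnit a}) (L : Set A) (h0 : (0 : A) ∈ L)
    (hL : ∀ d1 ∈ L, ∀ d2 ∈ L, ∀ u v, d2 + (d1 * u + d2 * v) * d1 ∈ L) (m : ℕ)
    (h : ∀ M, ∃ d ∈ L, GlQ m d M) : ∃ S ∈ L, ∀ M, GlQ m S M := by
  choose d hdL hd using h
  obtain ⟨t, ht⟩ := (isCompact_univ (X := GlMax A)).elim_nhds_subcover
    (fun M => {M' | GlQ m (d M) M'}) (fun M _ => (glQ_open m (d M)).mem_nhds (hd M))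
  have claim : ∀ (t : Finset (GlMax A)) (V : Set (GlMax A)), IsOpen V →
      (∀ M, M ∈ V ∨ ∃ N ∈ t, GlQ m (d N) M) → ∃ S ∈ L, ∀ M, M ∈ V ∨ GlQ m S M := by
    classical
    intro t
    induction t using Finset.induction_on with
    | empty => exact fun V _ h => ⟨0, h0, fun M => by simpa using Or.inl (h M)⟩
    | insert N t _ ih =>
      intro V hV h
      obtain ⟨S1, hS1, hc⟩ := ih (V ∪ {M | GlQ m (d N) M}) (hV.union (glQ_open _ _)) (by
        intro M
        rcases h M with hq | ⟨N', hN', hq⟩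
        · exact Or.inl (Or.inl hq)
        · rcases Finset.mem_insert.1 hN' with h' | h'
          · rw [h'] at hq; exact Or.inl (Or.inr hq)
          · exact Or.inr ⟨N', h', hq⟩)
      obtain ⟨u, v, huv⟩ := gl_pairstep hsr1 m (d N) S1 V hV (by
        intro M
        rcases hc M with (h | h) | h
        · exact Or.inl h
        · exact Or.inr (Or.inl h)
        · exact Or.inr (Or.inr h))
      exact ⟨_, hL _ (hdL N) _ hS1 u v, huv⟩
  obtain ⟨S, hS, hall⟩ := claim t ∅ isOpen_empty (by
    intro M
    obtain ⟨N, hN, h⟩ := mem_iUnion₂.1 (ht.2 (mem_univ M))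
    exact Or.inr ⟨N, hN, h⟩)
  exact ⟨S, hS, fun M => (hall M).resolve_left (by simp)⟩

lemma gl_F2 {m : ℕ} {d e : A} {M : GlMax A} (h1 : GlQ m d M) (h2 : GlQ m e M) :
    ∃ T : A, (∀ k, d * k = 0 → T * k = 0) ∧ (∀ k, e * k = 0 → star T * k = 0) ∧ GlQ m T M := by
  obtain ⟨a, C, a0, a1, a2, a3⟩ := glQ_toOrth h1
  obtain ⟨b, C', b0, b1, b2, b3⟩ := glQ_toOrth h2
  have : ∀ i, ∃ y, i < m → b i * y * a i ∉ M.1 := by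
    intro i
    by_cases hi : i < m
    · obtain ⟨y, hy⟩ := glMax_prime M (b i) (a i) (b3 i hi) (a3 i hi)
      exact ⟨y, fun _ => hy⟩
    · exact ⟨0, fun h => absurd h hi⟩
  choose y hy using this
  have as : ∀ i, star (a i) = a i := fun i => (gl_sa (a0 i)).star_eq
  have bs : ∀ i, star (b i) = b i := fun i => (gl_sa (b0 i)).star_eq
  set T := ∑ i ∈ Finset.range m, b i * y i * a i with hT
  have hTT : star T * T = ∑ i ∈ Finset.range m, star (b i * y i * a i) * (b i * y i * a i) := by
    rw [hT, star_sum, Finset.sum_mul_sum]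
    refine Finset.sum_congr rfl fun i hi => ?_
    refine Finset.sum_eq_single i (fun j _ hji => ?_) (fun h => absurd hi h)
    have : star (b i * y i * a i) * (b j * y j * a j)
      = a i * star (y i) * (b i * b j) * y j * a j := by
      simp only [star_mul, as, bs]; noncomm_ring
    rw [this, b1 i j hji.symm]; simp
  refine ⟨T, fun k hk => ?_, fun k hk => ?_, ?_⟩
  · rw [hT, Finset.sum_mul]
    refine Finset.sum_eq_zero fun i _ => ?_
    rw [mul_assoc, gl_dom' (a0 i) (a2 i) k hk, mul_zero]
  · rw [hT, star_sum, Finset.sum_mul]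
    refine Finset.sum_eq_zero fun i _ => ?_
    simp only [star_mul, bs]
    rw [mul_assoc, mul_assoc, gl_dom' (b0 i) (b2 i) k hk]; simp
  · refine glQ_ofOrth (fun i => star (b i * y i * a i) * (b i * y i * a i)) (fun _ => 1)
      (fun i _ => gl_ss _) (fun i hi j hj hij => ?_) (fun i hi => ?_) (fun i hi hm => ?_)
    · have : star (b i * y i * a i) * (b i * y i * a i) * (star (b j * y j * a j) * (b j * y j * a j))
        = star (b i * y i * a i) * (b i * y i) * (a i * a j) * star (y j) * b j * (b j * y j * a j) := by
        simp only [star_mul, as, bs]; noncomm_ring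
      rw [this, a1 i j hij]; simp
    · rw [one_smul, hTT]
      exact Finset.single_le_sum (f := fun i => star (b i * y i * a i) * (b i * y i * a i))
        (fun i _ => gl_ss _) (Finset.mem_range.2 hi)
    · exact hy i hi (gl_ss_mem M.1 (glMax_closed M) hm)

lemma gl_link (hsr1 : Dense {a : A | IsUnit a}) (m : ℕ) (d e : A) (h1 : ∀ M, GlQ m d M)
    (h2 : ∀ M, GlQ m e M) :
    ∃ S : A, (∀ k, d * k = 0 → S * k = 0) ∧ (∀ k, e * k = 0 → star S * k = 0) ∧
      ∀ M, GlQ m S M := by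
  obtain ⟨S, ⟨hS1, hS2⟩, hS⟩ := gl_family hsr1
    {S : A | (∀ k, d * k = 0 → S * k = 0) ∧ (∀ k, e * k = 0 → star S * k = 0)}
    (by constructor <;> simp) (by
      rintro d1 ⟨p1, p2⟩ d2 ⟨q1, q2⟩ u v
      constructor
      · intro k hk
        rw [add_mul, mul_assoc, p1 k hk, q1 k hk]; simp
      · intro k hk
        have : star (d2 + (d1 * u + d2 * v) * d1) * k = star d2 * k
          + star d1 * (star u * (star d1 * k) + star v * (star d2 * k)) := by
          simp only [star_add, star_mul]; noncomm_ring
        rw [this, p2 k hk, q2 k hk]; simp) m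
    (fun M => by
      obtain ⟨T, t1, t2, t3⟩ := gl_F2 (h1 M) (h2 M)
      exact ⟨T, ⟨t1, t2⟩, t3⟩)
  exact ⟨S, hS1, hS2, hS⟩

lemma gl_allcut (m : ℕ) (S : A) (h : ∀ M, GlQ m S M) :
    ∃ ε > 0, ∀ M, GlQ m (cfc (glth ε) (star S * S)) M := by
  obtain ⟨ε, hε, hh⟩ := gl_dirc (fun ε => {M | GlQ m (cfc (glth ε) (star S * S)) M})
    (fun ε _ => glQ_open _ _) (fun ε δ _ hd M hM => glQ_cut_mono (gl_ss S) hd hM)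
    (fun M => glQ_cut (h M))
  exact ⟨ε, hε, hh⟩

def GlP (m : ℕ) (e c d : A) : Prop :=
  0 ≤ c ∧ d * c = 0 ∧ (∀ k, e * k = 0 → c * k = 0 ∧ d * k = 0) ∧ ∀ M, GlQ m d M

lemma glth_zero {δ : ℝ} (h : 0 < δ) : glth δ 0 = 0 := by
  unfold glth; exact max_eq_right (by linarith)

lemma gl_ann0 (a x : A) (ha : IsSelfAdjoint a) (h : a * x = 0) (f : ℝ → ℝ) (hf : Continuous f)
    (h0 : f 0 = 0) : cfc f a * x = 0 := by rw [gl_ann a x ha h f hf, h0, zero_smul]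

lemma gl_chain (M : GlMax A) (a : ℕ → A) (m : ℕ) (h : ∀ i ≤ m, a i ∉ M.1) :
    ∃ x, x ∉ M.1 ∧ (∃ y, x = y * a m) ∧ ∀ M' : GlMax A, x ∉ M'.1 → ∀ i ≤ m, a i ∉ M'.1 := by
  induction m with
  | zero =>
    refine ⟨a 0, h 0 le_rfl, ⟨1, by simp⟩, fun M' hM i hi => ?_⟩
    obtain rfl : i = 0 := by omega
    exact hM
  | succ m ih =>
    obtain ⟨x, hx, _, hx'⟩ := ih fun i hi => h i (by omega)
    obtain ⟨w, hw⟩ := glMax_prime M x (a (m+1)) hx (h _ le_rfl)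
    refine ⟨x * w * a (m+1), hw, ⟨_, rfl⟩, fun M' hM i hi => ?_⟩
    rcases Nat.le_succ_iff.1 hi with hi | rfl
    · exact hx' M' (fun h => hM (M'.1.mul_mem_right _ _ (M'.1.mul_mem_right _ _ h))) i hi
    · exact fun h => hM (M'.1.mul_mem_left _ _ h)

lemma gl_pair1 (m : ℕ) (e : A) (h : ∀ M, GlQ (m + 1) e M) (M : GlMax A) :
    ∃ c d, GlP m e c d ∧ c ∉ M.1 := by
  obtain ⟨z, hz0, ⟨C, hzC⟩, hz⟩ := h M
  obtain ⟨x, hx, ⟨y, hxy⟩, hx'⟩ := gl_chain M (fun i => cfc (glb i) z) m fun i hi => hz i (by omega)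
  set b := star x * x with hb
  have hb0 : 0 ≤ b := gl_ss x
  have hbs := gl_sa hb0
  have hbM : b ∉ M.1 := fun h => hx (gl_ss_mem M.1 (glMax_closed M) h)
  obtain ⟨δ, hδ, hc⟩ := gl_th_nmem M b hb0 hbM
  set g := cfc (fun t => glka δ t * t) b with hg
  have hgs : star g = g := gl_star _ _
  refine ⟨cfc (glth δ) b, e * (1 - g), ⟨gl_nn' _ _ (glth_nn _), ?_, fun k hk => ?_, fun M' => ?_⟩, hc⟩
  · have : g * cfc (glth δ) b = cfc (glth δ) b := by
      rw [hg, gl_cm _ _ (glkat_c hδ) (glth_c _)]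
      congr 1; funext t; exact glka_th hδ t
    rw [mul_assoc, sub_mul, this]; simp
  · have h1 : z * k = 0 := gl_dom' hz0 hzC k hk
    have h2 : cfc (glb m) z * k = 0 := gl_ann0 z k (gl_sa hz0) h1 _ (glb_c m) (glb_low m 0 (by norm_num))
    have h3 : b * k = 0 := by rw [hb, hxy, mul_assoc, mul_assoc, h2]; simp
    refine ⟨gl_ann0 b k hbs h3 _ (glth_c _) (glth_zero hδ), ?_⟩
    have h4 : g * k = 0 := gl_ann0 b k hbs h3 _ (glkat_c hδ) (by simp)
    rw [mul_assoc, sub_mul, h4]; simpa using hk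
  · by_cases hbM' : b ∈ M'.1
    · obtain ⟨z', hz0', ⟨C', hzC'⟩, hz'⟩ := h M'
      have hgM : g ∈ M'.1 := gl_mem M'.1 (glMax_closed M') b hbs hbM' _ (glkat_c hδ) (by simp)
      have hs : star (1 - g) = 1 - g := by rw [star_sub, hgs, star_one]
      have h1 := gl_conj_nn hz0' (1 - g)
      have h2 := gl_conj_mono hzC' (1 - g)
      refine ⟨star (1 - g) * z' * (1 - g), h1, ⟨C', h2.trans (le_of_eq ?_)⟩, fun i hi hm => ?_⟩
      · rw [star_mul, mul_smul_comm, smul_mul_assoc]; congr 1; noncomm_ring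
      · have h3 : star (1 - g) * z' * (1 - g) - z' ∈ M'.1 := by
          have : star (1 - g) * z' * (1 - g) - z' = g * (-z' * (1 - g)) + (-z') * g := by
            rw [hs]; noncomm_ring
          rw [this]
          exact M'.1.add_mem (M'.1.mul_mem_right _ _ hgM) (M'.1.mul_mem_left _ _ hgM)
        have h4 := gl_congr M'.1 (glMax_closed M') _ _ (gl_sa h1) (gl_sa hz0') h3 (glb i) (glb_c i)
        have h5 := M'.1.sub_mem hm h4
        rw [sub_sub_cancel] at h5
        exact hz' i (by omega) h5
    · have hxM' : x ∉ M'.1 := fun h => hbM' (M'.1.mul_mem_left _ _ h)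
      refine glQ_ofOrth (fun i => cfc (glb i) z) (fun _ => C) (fun i _ => gl_nn' _ _ (glb_nn i))
        (fun i _ j _ hij => gl_bump_orth z i j hij) (fun i hi => ?_)
        (fun i hi => hx' M' hxM' i hi.le)
      set f := cfc (glb i) z with hf
      have hfs : star f = f := gl_star _ _
      have h1 : b * f = 0 := by
        rw [hb, hxy, mul_assoc, mul_assoc, gl_bump_orth z m i (by omega)]; simp
      have h2 : g * f = 0 := gl_ann0 b f hbs h1 _ (glkat_c hδ) (by simp)
      have h3 : f * g = 0 := by
        have := congrArg star h2
        rwa [star_mul, hfs, hgs, star_zero] at this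
      have h4 : star (1 - g) * f * (1 - g) = f := by
        rw [star_sub, hgs, star_one]
        have : (1 - g) * f * (1 - g) = f - g * f - (f * g) + g * f * g := by noncomm_ring
        rw [this, h2, h3]; simp
      have h5 := gl_conj_mono ((gl_bump_le z hz0 i).trans hzC) (1 - g)
      rw [h4] at h5
      refine h5.trans (le_of_eq ?_)
      rw [star_mul, mul_smul_comm, smul_mul_assoc]; congr 1; noncomm_ring

lemma gl_combine (hsr1 : Dense {a : A | IsUnit a}) (m : ℕ) (e c d c' d' : A) (h : GlP m e c d)
    (h' : GlP m e c' d') :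
    ∃ c'' d'', GlP m e c'' d'' ∧ ∀ M : GlMax A, (c ∉ M.1 ∨ c' ∉ M.1) → c'' ∉ M.1 := by
  obtain ⟨p0, p1, p2, p3⟩ := h
  obtain ⟨q0, q1, q2, q3⟩ := h'
  obtain ⟨S, s1, s2, s3⟩ := gl_link hsr1 m d d' p3 q3
  obtain ⟨ε, hε, hcut⟩ := gl_allcut m S s3
  obtain ⟨W, w1, w2⟩ := gl_W hsr1 S ε hε
  set n := star S * S with hn
  have hns := gl_sa (gl_ss S)
  have hW0 : 0 ≤ star (W : A) * c' * W := gl_conj_nn q0 _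
  have hth : ∀ k, S * k = 0 → cfc (glth ε) n * k = 0 := fun k hk =>
    gl_ann0 n k hns (by rw [hn, mul_assoc, hk, mul_zero]) _ (glth_c _) (glth_zero hε)
  refine ⟨c + star (W : A) * c' * W, cfc (glth ε) n, ⟨add_nonneg p0 hW0, ?_, fun k hk => ?_, hcut⟩, ?_⟩
  · have h1 : cfc (glth ε) n * star (W : A) = cfc (glth ε) n * star S := by
      have := congrArg star w1
      rwa [star_mul, star_mul, gl_star] at this
    have h2 : cfc (glth ε) n * (star (W : A) * c' * W) = cfc (glth ε) n * star S * c' * W := by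
      rw [← h1]; noncomm_ring
    rw [mul_add, hth c (s1 c p1), h2, mul_assoc _ (star S), s2 c' q1]; simp
  · obtain ⟨a1, a2⟩ := p2 k hk
    obtain ⟨b1, b2⟩ := q2 k hk
    refine ⟨?_, hth k (s1 k a2)⟩
    rw [add_mul, a1, mul_assoc, w2 k (s1 k a2) (s2 k b2), mul_assoc, b1]; simp
  · intro M hM hmem
    rcases hM with hM | hM
    · exact hM (gl_her M.1 (glMax_closed M) p0 (le_add_of_nonneg_right hW0) hmem)
    · have h1 := gl_her M.1 (glMax_closed M) hW0 (le_add_of_nonneg_left p0) hmem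
      apply hM
      have h2 := M.1.mul_mem_right _ (↑W⁻¹ : A) (M.1.mul_mem_left (star (↑W⁻¹ : A)) _ h1)
      have h3 : star (↑W⁻¹ : A) * (star (W : A) * c' * W) * (↑W⁻¹ : A) = c' := by
        have : star (↑W⁻¹ : A) * (star (W : A) * c' * W) * (↑W⁻¹ : A)
          = star ((W : A) * (↑W⁻¹ : A)) * c' * (W * ↑W⁻¹) := by rw [star_mul]; noncomm_ring
        rw [this, Units.mul_inv]; simp
      rwa [h3] at h2

lemma gl_pairall (hsr1 : Dense {a : A | IsUnit a}) (m : ℕ) (e : A) (h : ∀ M, GlQ (m + 1) e M) :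
    ∃ c d, GlP m e c d ∧ ∀ M : GlMax A, c ∉ M.1 := by
  choose c d hP hc using gl_pair1 m e h
  obtain ⟨t, ht⟩ := (isCompact_univ (X := GlMax A)).elim_nhds_subcover
    (fun M => {M' : GlMax A | c M ∉ M'.1}) (fun M _ => (glMax_open (c M)).mem_nhds (hc M))
  have claim : ∀ t : Finset (GlMax A), ∃ c' d', GlP m e c' d' ∧
      ∀ M : GlMax A, (∃ N ∈ t, c N ∉ M.1) → c' ∉ M.1 := by
    classical
    intro t
    induction t using Finset.induction_on with
    | empty => exact ⟨0, e, ⟨le_rfl, by simp, fun k hk => ⟨by simp, hk⟩,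
        fun M => glQ_le (Nat.le_succ m) (h M)⟩, by simp⟩
    | insert N t _ ih =>
      obtain ⟨c1, d1, hP1, h1⟩ := ih
      obtain ⟨c2, d2, hP2, h2⟩ := gl_combine hsr1 m e _ _ _ _ (hP N) hP1
      refine ⟨c2, d2, hP2, fun M hM => h2 M ?_⟩
      obtain ⟨N', hN', h3⟩ := hM
      rcases Finset.mem_insert.1 hN' with rfl | h'
      · exact Or.inl h3
      · exact Or.inr (h1 M ⟨N', h', h3⟩)
  obtain ⟨c', d', hP', hc'⟩ := claim t
  refine ⟨c', d', hP', fun M => hc' M ?_⟩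
  obtain ⟨N, hN, h⟩ := mem_iUnion₂.1 (ht.2 (mem_univ M))
  exact ⟨N, hN, h⟩

theorem gl_ind (hsr1 : Dense {a : A | IsUnit a}) (m : ℕ) (e : A) (h : ∀ M, GlQ (m + 1) e M) :
    ∃ c : ℕ → A, (∀ i ≤ m, 0 ≤ c i) ∧ (∀ i ≤ m, ∀ j ≤ m, i ≠ j → c i * c j = 0) ∧
      (∀ i ≤ m, ∀ M : GlMax A, c i ∉ M.1) ∧ ∀ i ≤ m, ∀ k, e * k = 0 → c i * k = 0 := by
  induction m generalizing e with
  | zero =>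
    refine ⟨fun _ => star e * e, fun _ _ => gl_ss e, fun i hi j hj => by omega, fun i hi M hM => ?_,
      fun i hi k hk => by rw [mul_assoc, hk, mul_zero]⟩
    exact glQ_one_iff.1 (h M) (gl_ss_mem M.1 (glMax_closed M) hM)
  | succ m ih =>
    obtain ⟨c, d, ⟨p0, p1, p2, p3⟩, hc⟩ := gl_pairall hsr1 (m+1) e h
    obtain ⟨c', q0, q1, q2, q3⟩ := ih d p3
    have hcc : ∀ i ≤ m, c' i * c = 0 := fun i hi => q3 i hi c p1
    have hcc' : ∀ i ≤ m, c * c' i = 0 := fun i hi => by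
      have := congrArg star (hcc i hi)
      rwa [star_mul, (gl_sa p0).star_eq, (gl_sa (q0 i hi)).star_eq, star_zero] at this
    refine ⟨fun i => if i ≤ m then c' i else c, fun i hi => ?_, fun i hi j hj hij => ?_,
      fun i hi M => ?_, fun i hi k hk => ?_⟩
    · by_cases h1 : i ≤ m
      · simpa [h1] using q0 i h1
      · simpa [h1] using p0
    · by_cases h1 : i ≤ m <;> by_cases h2 : j ≤ m
      · simpa [h1, h2] using q1 i h1 j h2 hij
      · simpa [h1, h2] using hcc i h1
      · simpa [h1, h2] using hcc' j h2
      · omega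
    · by_cases h1 : i ≤ m
      · simpa [h1] using q2 i h1 M
      · simpa [h1] using hc M
    · by_cases h1 : i ≤ m
      · simpa [h1] using q3 i h1 k (p2 k hk).2
      · simpa [h1] using (p2 k hk).1

end G5

section G6
open Filter Topology Set
set_option linter.unusedSectionVars false
set_option linter.unusedVariables false
variable {A : Type*} [CStarAlgebra A] [PartialOrder A] [StarOrderedRing A]

lemma gl_quot.{u} {A : Type u} [CStarAlgebra A] (I : TwoSidedIdeal A) :
    ∃ (Q : Type u) (_ : Ring Q) (_ : Algebra ℂ Q) (q : A →ₐ[ℂ] Q), ∀ x, q x = 0 ↔ x ∈ I := by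
  refine ⟨I.ringCon.Quotient, inferInstance, inferInstance,
    { RingCon.mk' I.ringCon with commutes' := fun _ => rfl }, fun x => ?_⟩
  rw [TwoSidedIdeal.mem_iff, ← RingCon.eq]
  rfl

lemma gl_le_norm_one (a : A) (ha : 0 ≤ a) : a ≤ ‖a‖ • (star (1:A) * 1) := by
  have := (CStarAlgebra.norm_le_iff_le_algebraMap a (norm_nonneg a) ha).1 le_rfl
  rw [Algebra.algebraMap_eq_smul_one] at this
  simpa using this

lemma gl_step (P : ℕ → Prop) (h1 : P 1) (k : ℕ) (hk : 1 ≤ k) (hP : ¬ P k) :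
    ∃ n, 1 ≤ n ∧ n < k ∧ P n ∧ ¬ P (n + 1) := by
  by_contra! hcon
  have : ∀ n, 1 ≤ n → n ≤ k → P n := by
    intro n hn
    induction n, hn using Nat.le_induction with
    | base => exact fun _ => h1
    | succ n hn ih => exact fun h => hcon n hn (by omega) (ih (by omega))
  exact hP (this k hk le_rfl)

lemma gl_F1_min (M : GlMax A) (k : ℕ) (hk : 1 ≤ k) (hn : ¬ GlQ k (1 : A) M) :
    ∃ a : A, 0 ≤ a ∧ a ∉ M.1 ∧ ∀ b b' : A, 0 ≤ b → 0 ≤ b' → b * b' = 0 →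
      (∀ k, a * k = 0 → b * k = 0) → (∀ k, a * k = 0 → b' * k = 0) → b ∈ M.1 ∨ b' ∈ M.1 := by
  obtain ⟨n, n1, nk, ⟨a, a0, a1, a2⟩, hmax⟩ := gl_step
    (fun j => ∃ a : ℕ → A, (∀ i < j, 0 ≤ a i) ∧ (∀ i < j, ∀ l < j, i ≠ l → a i * a l = 0) ∧
      ∀ i < j, a i ∉ M.1) ⟨fun _ => 1, fun _ _ => zero_le_one, fun i hi l hl h => by omega,
        fun _ _ => M.2.1⟩ k hk (by
      rintro ⟨a, a0, a1, a2⟩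
      exact hn (glQ_ofOrth a (fun i => ‖a i‖) a0 a1 (fun i hi => gl_le_norm_one _ (a0 i hi)) a2))
  refine ⟨a 0, a0 0 (by omega), a2 0 (by omega), fun b b' hb hb' hbb h1 h2 => ?_⟩
  by_contra! hcon
  apply hmax
  have h1' : ∀ i, 0 < i → i < n → b * a i = 0 ∧ a i * b = 0 := by
    intro i hi hin
    have := h1 (a i) (a1 0 (by omega) i hin (by omega))
    refine ⟨this, ?_⟩
    have := congrArg star this
    rwa [star_mul, (gl_sa hb).star_eq, (gl_sa (a0 i hin)).star_eq, star_zero] at this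
  have h2' : ∀ i, 0 < i → i < n → b' * a i = 0 ∧ a i * b' = 0 := by
    intro i hi hin
    have := h2 (a i) (a1 0 (by omega) i hin (by omega))
    refine ⟨this, ?_⟩
    have := congrArg star this
    rwa [star_mul, (gl_sa hb').star_eq, (gl_sa (a0 i hin)).star_eq, star_zero] at this
  have hbb' : b' * b = 0 := by
    have := congrArg star hbb
    rwa [star_mul, (gl_sa hb).star_eq, (gl_sa hb').star_eq, star_zero] at this
  refine ⟨fun i => if i = 0 then b else if i = n then b' else a i, fun i hi => ?_,
    fun i hi l hl hil => ?_, fun i hi => ?_⟩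
  · dsimp only; split_ifs with c1 c2
    · exact hb
    · exact hb'
    · exact a0 i (by omega)
  · dsimp only; split_ifs with c1 c2 c3 c4 c5 c6 c7
    all_goals first
      | omega
      | exact hbb
      | exact hbb'
      | exact (h1' _ (by omega) (by omega)).1
      | exact (h1' _ (by omega) (by omega)).2
      | exact (h2' _ (by omega) (by omega)).1
      | exact (h2' _ (by omega) (by omega)).2
      | exact a1 _ (by omega) _ (by omega) hil
  · dsimp only; split_ifs with c1 c2
    · exact hcon.1
    · exact hcon.2
    · exact a2 i (by omega)

lemma gl_lip_closed (M : GlMax A) (z : A) (hz : 0 ≤ z) (F : ℝ → ℝ → ℝ) (hF : ∀ s, Continuous (F s))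
    (hlip : ∀ s s' t, 0 ≤ t → |F s t - F s' t| ≤ |s - s'|) :
    IsClosed {s : ℝ | cfc (F s) z ∈ M.1} := by
  have hc : Continuous fun s => cfc (F s) z := by
    refine LipschitzWith.continuous (K := 1) (LipschitzWith.of_dist_le_mul fun s s' => ?_)
    rw [dist_eq_norm, gl_sub _ _ (hF s) (hF s')]
    refine gl_norm _ _ hz _ (by positivity) fun t ht => ?_
    simpa [Real.dist_eq] using hlip s s' t ht
  exact (glMax_closed M).preimage hc

lemma gl_F1_quad (M : GlMax A) (a : A)
    (h : ∀ b b' : A, 0 ≤ b → 0 ≤ b' → b * b' = 0 →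
      (∀ k, a * k = 0 → b * k = 0) → (∀ k, a * k = 0 → b' * k = 0) → b ∈ M.1 ∨ b' ∈ M.1)
    (z : A) (hz : 0 ≤ z) (hza : ∀ k, a * k = 0 → z * k = 0) : ∃ c : ℝ, z * z - c • z ∈ M.1 := by
  have hzs := gl_sa hz
  -- u s t = min t 1 * max (s - t) 0
  let u : ℝ → ℝ → ℝ := fun s t => min t 1 * max (s - t) 0
  have hu : ∀ s, Continuous (u s) := fun s => by simp only [u]; fun_prop
  have c1 : IsClosed {s : ℝ | cfc (glth s) z ∈ M.1} := gl_lip_closed M z hz glth glth_c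
    (fun s s' t ht => by
      unfold glth
      refine (abs_max_sub_max_le_abs _ _ _).trans ?_
      rw [abs_sub_comm s s']; apply le_of_eq; congr 1; ring)
  have c2 : IsClosed {s : ℝ | cfc (u s) z ∈ M.1} := gl_lip_closed M z hz u hu
    (fun s s' t ht => by
      simp only [u]
      rw [← mul_sub, abs_mul, abs_of_nonneg (le_min ht zero_le_one)]
      have : |max (s - t) 0 - max (s' - t) 0| ≤ |s - s'| := by
        refine (abs_max_sub_max_le_abs _ _ _).trans (le_of_eq ?_); congr 1; ring
      calc _ ≤ 1 * |s - s'| := by gcongr; exact min_le_right _ _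
        _ = _ := one_mul _)
  set T := {s : ℝ | cfc (glth s) z ∈ M.1} ∩ Ici 0 with hT
  have hTc : IsClosed T := c1.inter isClosed_Ici
  have hTb : BddBelow T := ⟨0, fun s hs => hs.2⟩
  have hTn : T.Nonempty := by
    refine ⟨‖z‖, ?_, norm_nonneg z⟩
    have : cfc (glth ‖z‖) z = 0 := by
      have e : cfc (glth ‖z‖) z = cfc (fun _ : ℝ => (0:ℝ)) z := by
        refine cfc_congr fun t ht => ?_
        have h1 : t ≤ ‖z‖ := by
          rcases subsingleton_or_nontrivial A with hA | hA
          · rw [spectrum.of_subsingleton] at ht; exact absurd ht (by simp)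
          · have := spectrum.norm_le_norm_of_mem ht
            exact (le_abs_self t).trans this
        unfold glth; exact max_eq_right (by linarith)
      rw [e]; exact cfc_const_zero ℝ z
    change cfc (glth ‖z‖) z ∈ M.1
    rw [this]; exact M.1.zero_mem
  set c := sInf T with hc
  have hcT : c ∈ T := hTc.csInf_mem hTn hTb
  have hc0 : 0 ≤ c := hcT.2
  have hlow : ∀ s, 0 ≤ s → s < c → cfc (u s) z ∈ M.1 := by
    intro s hs hsc
    have hns : cfc (glth s) z ∉ M.1 := fun hm => not_le.2 hsc (csInf_le hTb ⟨hm, hs⟩)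
    refine (h (cfc (glth s) z) (cfc (u s) z) (gl_nn' _ _ (glth_nn s))
      (gl_nn _ _ hz fun t ht => mul_nonneg (le_min ht zero_le_one) (le_max_right _ _)) ?_ ?_ ?_).resolve_left hns
    · rw [gl_cm _ _ (glth_c s) (hu s)]
      refine gl_zero _ _ fun t => ?_
      simp only [u, glth]
      rcases le_total t s with h | h
      · rw [max_eq_right (by linarith : t - s ≤ 0), zero_mul]
      · rw [max_eq_right (by linarith : s - t ≤ 0)]; simp
    · intro k hk
      exact gl_ann0 z k hzs (hza k hk) _ (glth_c s) (by unfold glth; exact max_eq_right (by linarith))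
    · intro k hk
      exact gl_ann0 z k hzs (hza k hk) _ (hu s) (by simp [u])
  have hcu : cfc (u c) z ∈ M.1 := by
    rcases hc0.eq_or_lt with h0 | h0
    · have : cfc (u c) z = cfc (fun _ : ℝ => (0:ℝ)) z := gl_eq _ _ z hz fun t ht => by
        simp only [u, ← h0]; rw [max_eq_right (by linarith)]; simp
      rw [this, cfc_const_zero ℝ z]; exact M.1.zero_mem
    · have h1 : c ∈ closure (Ico 0 c) := by
        rw [closure_Ico h0.ne]; exact ⟨hc0, le_rfl⟩
      exact c2.closure_subset_iff.2 (fun s hs => hlow s hs.1 hs.2) h1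
  refine ⟨c, ?_⟩
  have e1 : z * z - c • z = z * cfc (glth c) z - cfc (fun t : ℝ => max t 1) z * cfc (u c) z := by
    have e2 : z * z - c • z = cfc (fun t : ℝ => t * t - c * t) z := by
      rw [← gl_sub (fun t : ℝ => t * t) (fun t : ℝ => c * t) (by fun_prop) (by fun_prop),
        ← gl_smul c (fun t : ℝ => t) continuous_id,
        ← gl_cm (fun t : ℝ => t) (fun t : ℝ => t) continuous_id continuous_id, gl_id z hzs]
    rw [e2, gl_idm _ (glth_c c) z hzs, gl_cm _ _ (by fun_prop) (hu c),
      gl_sub _ _ (by exact continuous_id.mul (glth_c c)) (by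
        exact (continuous_id.max continuous_const).mul (hu c))]
    congr 1; funext t
    simp only [u, glth]
    rw [← mul_assoc, max_mul_min, mul_one, ← mul_sub]
    have : max (t - c) 0 - max (c - t) 0 = t - c := by
      rcases le_total t c with h | h
      · rw [max_eq_right (by linarith : t - c ≤ 0), max_eq_left (by linarith : 0 ≤ c - t)]; ring
      · rw [max_eq_left (by linarith : 0 ≤ t - c), max_eq_right (by linarith : c - t ≤ 0)]; ring
    rw [this]; ring
  rw [e1]
  exact M.1.sub_mem (M.1.mul_mem_left _ _ hcT.1) (M.1.mul_mem_left _ _ hcu)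

end G6

section G7
open Filter Topology Set
set_option linter.unusedSectionVars false
set_option linter.unusedVariables false
variable {A : Type*} [CStarAlgebra A] [PartialOrder A] [StarOrderedRing A]

/-- minimal projection mod M -/
lemma gl_F1_p (M : GlMax A) (k : ℕ) (hk : 1 ≤ k) (hn : ¬ GlQ k (1 : A) M) :
    ∃ p : A, 0 ≤ p ∧ p ∉ M.1 ∧ p * p - p ∈ M.1 ∧ 
     ∀ z : A, 0 ≤ z → (∀ k, p * k = 0 → z * k = 0) → ∃ c : ℝ, z * z - c • z ∈ M.1 := by
  obtain ⟨a, a0, a1, a2⟩ := gl_F1_min M k hk hn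
  have hM := glMax_closed M
  have hq := gl_F1_quad M a a2
  obtain ⟨c, hc⟩ := hq a a0 (fun _ h => h)
  have haa : 0 ≤ a * a := by
    have := gl_ss a; rwa [(gl_sa a0).star_eq] at this
  have haM : a * a ∉ M.1 := fun h => a1 (gl_sq_mem M.1 hM (gl_sa a0) h)
  have hc0 : 0 < c := by
    by_contra hcn
    apply haM
    refine gl_her M.1 hM haa ?_ hc
    have : 0 ≤ (-c) • a := smul_nonneg (by linarith) a0
    rw [neg_smul] at this
    rw [sub_eq_add_neg]; exact le_add_of_nonneg_right this
  refine ⟨c⁻¹ • a, smul_nonneg (by positivity) a0, fun h => a1 ?_, ?_, fun z hz h => hq z hz fun k hk => h k ?_⟩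
  · have := gl_smul_mem M.1 c h
    rwa [smul_smul, mul_inv_cancel₀ hc0.ne', one_smul] at this
  · have := gl_smul_mem M.1 (c⁻¹ * c⁻¹) hc
    convert this using 1
    rw [smul_sub, smul_mul_smul_comm, smul_smul]
    congr 2
    field_simp
  · rw [smul_mul_assoc, hk, smul_zero]

lemma gl_F1_pos (M : GlMax A) (p : A) (p0 : 0 ≤ p) (p1 : p ∉ M.1) (p2 : p * p - p ∈ M.1)
    (p3 : ∀ z : A, 0 ≤ z → (∀ k, p * k = 0 → z * k = 0) → ∃ c : ℝ, z * z - c • z ∈ M.1)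
    (x : A) (hx : 0 ≤ x) : ∃ c : ℝ, 0 ≤ c ∧ p * x * p - c • p ∈ M.1 := by
  have hM := glMax_closed M
  have ps := (gl_sa p0).star_eq
  have nn : ∀ y : A, 0 ≤ y → 0 ≤ p * y * p := fun y hy => by
    have := gl_conj_nn hy p; rwa [ps] at this
  have an : ∀ y k : A, p * k = 0 → p * y * p * k = 0 := fun y k h => by
    rw [mul_assoc, h, mul_zero]
  by_cases hz : p * x * p ∈ M.1
  · exact ⟨0, le_rfl, by simpa using hz⟩
  obtain ⟨c1, h1⟩ := p3 _ (nn x hx) (an x)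
  obtain ⟨c2, h2⟩ := p3 _ (nn (x + 1) (add_nonneg hx zero_le_one)) (an _)
  obtain ⟨Q, _, _, q, hq⟩ := gl_quot M.1
  -- real scalars
  have qr : ∀ (c : ℝ) (y : A), q (c • y) = (c : ℂ) • q y := fun c y => by
    rw [← Complex.coe_smul, map_smul]
  rw [← hq, map_sub, sub_eq_zero] at p2
  rw [← hq, map_sub, sub_eq_zero, qr] at h1 h2
  rw [← hq] at hz p1
  simp only [map_mul, map_add, map_one] at *
  set P := q p
  set Z := P * q x * P with hZ
  have e1 : P * (q x + 1) * P = Z + P := by rw [mul_add, add_mul, mul_one, p2]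
  have PZ : P * Z = Z := by rw [hZ, ← mul_assoc, ← mul_assoc, p2]
  have ZP : Z * P = Z := by rw [hZ, mul_assoc, p2]
  have e2 : ((c1 : ℂ) + 2 - c2) • Z = ((c2 : ℂ) - 1) • P := by
    rw [e1, add_mul, mul_add, mul_add, h1, ZP, PZ, p2, smul_add] at h2
    have : (c1 : ℂ) • Z + Z + (Z + P) - ((c2 : ℂ) • Z + (c2 : ℂ) • P) = 0 := sub_eq_zero.2 h2
    rw [← sub_eq_zero, ← this]
    module
  by_cases hc : (c1 : ℝ) + 2 - c2 = 0
  · exfalso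
    have hcc : (c1 : ℂ) + 2 - c2 = 0 := by exact_mod_cast hc
    rw [hcc, zero_smul] at e2
    have hc2 : c2 = 1 := by
      by_contra hne
      apply p1
      have hne' : (c2 : ℂ) - 1 ≠ 0 := by
        intro h; apply hne; exact_mod_cast sub_eq_zero.1 h
      rcases smul_eq_zero.1 e2.symm with h | h
      · exact absurd h hne'
      · exact h
    have hc1 : c1 = -1 := by linarith
    apply hz
    have hmem : p * x * p * (p * x * p) + p * x * p ∈ M.1 := by
      rw [← hq]; simp only [map_mul, map_add]
      change Z * Z + Z = 0
      rw [h1, hc1]; push_cast; rw [neg_smul, one_smul, neg_add_cancel]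
    have hn := nn x hx
    have : p * x * p ∈ M.1 := gl_her M.1 hM hn (by
      have h := gl_ss (p * x * p)
      rw [(gl_sa hn).star_eq] at h
      exact le_add_of_nonneg_left h) hmem
    rw [← hq] at this; simpa only [map_mul] using this
  · have hcc : (c1 : ℂ) + 2 - c2 ≠ 0 := by exact_mod_cast hc
    set r := (c2 - 1) / (c1 + 2 - c2) with hr
    have e3 : Z = (r : ℂ) • P := by
      have := congrArg (fun w => ((c1 : ℂ) + 2 - c2)⁻¹ • w) e2
      simp only [smul_smul, inv_mul_cancel₀ hcc, one_smul] at this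
      rw [this, hr]; push_cast; rw [div_eq_inv_mul]
    have hmem : p * x * p - r • p ∈ M.1 := by
      rw [← hq, map_sub, qr]; simp only [map_mul]; exact sub_eq_zero.2 e3
    refine ⟨r, ?_, hmem⟩
    by_contra hneg
    apply hz
    have : p * x * p ∈ M.1 := gl_her M.1 hM (nn x hx) (by
      have : 0 ≤ (-r) • p := smul_nonneg (by linarith) p0
      rw [neg_smul] at this
      rw [sub_eq_add_neg]; exact le_add_of_nonneg_right this) hmem
    rw [← hq] at this; simpa only [map_mul] using this

lemma gl_F1_all (M : GlMax A) (p : A) 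
    (h : ∀ x : A, 0 ≤ x → ∃ c : ℝ, 0 ≤ c ∧ p * x * p - c • p ∈ M.1)
    (x : A) : ∃ c : ℂ, p * x * p - c • p ∈ M.1 := by
  have hx : x ∈ Submodule.span ℂ {a : A | 0 ≤ a} := by
    rw [CStarAlgebra.span_nonneg]; trivial
  induction hx using Submodule.span_induction with
  | mem x hx =>
    obtain ⟨c, _, hc⟩ := h x hx
    exact ⟨c, by rwa [Complex.coe_smul]⟩
  | zero => exact ⟨0, by simpa using M.1.zero_mem⟩
  | add x y _ _ hx hy =>
    obtain ⟨c, hc⟩ := hx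
    obtain ⟨d, hd⟩ := hy
    refine ⟨c + d, ?_⟩
    have := M.1.add_mem hc hd
    convert this using 1
    rw [mul_add, add_mul, add_smul]; abel
  | smul a x _ hx =>
    obtain ⟨c, hc⟩ := hx
    refine ⟨a * c, ?_⟩
    have := gl_csmul_mem M.1 a hc
    convert this using 1
    rw [smul_sub, smul_smul, mul_smul_comm, smul_mul_assoc]

/-- the pure state -/
lemma gl_F1_state (M : GlMax A) (p : A) (p0 : 0 ≤ p) (p1 : p ∉ M.1) (p2 : p * p - p ∈ M.1)
    (p3 : ∀ z : A, 0 ≤ z → (∀ k, p * k = 0 → z * k = 0) → ∃ c : ℝ, z * z - c • z ∈ M.1) :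
    ∃ φ : A →ₗ[ℂ] ℂ, (∀ x, p * x * p - φ x • p ∈ M.1) ∧ φ 1 = 1 ∧ (∀ x, φ (star x) = star (φ x)) ∧
      (∀ x, ∃ r : ℝ, 0 ≤ r ∧ φ (star x * x) = r) ∧ ∀ x, φ (star x * x) = 0 → x * p ∈ M.1 := by
  have hM := glMax_closed M
  have ps := (gl_sa p0).star_eq
  have hpos := gl_F1_pos M p p0 p1 p2 p3
  have hall := gl_F1_all M p hpos
  choose φ hφ using hall
  have uniq : ∀ x (c : ℂ), p * x * p - c • p ∈ M.1 → φ x = c := by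
    intro x c hc
    by_contra hne
    apply p1
    have h1 := M.1.sub_mem hc (hφ x)
    have h2 : (φ x - c) • p ∈ M.1 := by
      convert h1 using 1
      rw [sub_smul]; abel
    have := gl_csmul_mem M.1 (φ x - c)⁻¹ h2
    rwa [smul_smul, inv_mul_cancel₀ (sub_ne_zero.2 hne), one_smul] at this
  refine ⟨{ toFun := φ, map_add' := fun x y => uniq _ _ ?_, map_smul' := fun c x => uniq _ _ ?_ },
    hφ, uniq _ _ ?_, fun x => uniq _ _ ?_, fun x => ?_, fun x hx => ?_⟩
  · convert M.1.add_mem (hφ x) (hφ y) using 1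
    rw [mul_add, add_mul, add_smul]; abel
  · convert gl_csmul_mem M.1 c (hφ x) using 1
    rw [smul_sub, smul_smul, mul_smul_comm, smul_mul_assoc]; rfl
  · rwa [mul_one, one_smul]
  · convert gl_star_mem M.1 hM (hφ x) using 1
    rw [star_sub, star_smul, star_mul, star_mul, ps, mul_assoc]; rfl
  · obtain ⟨c, hc, h⟩ := hpos _ (gl_ss x)
    exact ⟨c, hc, uniq _ _ (by rwa [Complex.coe_smul])⟩
  · have hx' : φ (star x * x) = 0 := hx
    have := hφ (star x * x)
    rw [hx', zero_smul, sub_zero] at this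
    refine gl_ss_mem M.1 hM ?_
    rw [star_mul, ps]
    convert this using 1
    simp only [mul_assoc]

end G7

section G8
open Filter Topology Set
set_option linter.unusedSectionVars false
set_option linter.unusedVariables false
variable {A : Type*} [CStarAlgebra A] [PartialOrder A] [StarOrderedRing A]

lemma gl_F1 (k : ℕ) (hk : 1 ≤ k)
    (H : ∀ (j : ℕ), 1 ≤ j → j < k →
        ∀ φ : A →⋆ₙₐ[ℂ] Matrix (Fin j) (Fin j) ℂ, ∀ a : A, φ a = 0) (M : GlMax A) :
    GlQ k (1 : A) M := by
  by_contra hn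
  have hM := glMax_closed M
  obtain ⟨p, p0, p1, p2, p3⟩ := gl_F1_p M k hk hn
  obtain ⟨φ, f1, f2, f3, f4, f5⟩ := gl_F1_state M p p0 p1 p2 p3
  have ps := (gl_sa p0).star_eq
  obtain ⟨Q, _, _, q, hq⟩ := gl_quot M.1
  have qr : ∀ (c : ℝ) (y : A), q (c • y) = (c : ℂ) • q y := fun c y => by
    rw [← Complex.coe_smul, map_smul]
  have P1 : q p ≠ 0 := fun h => p1 ((hq p).1 h)
  have P2 : q p * q p = q p := by
    rw [← hq, map_sub, sub_eq_zero, map_mul] at p2; exact p2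
  have P3 : ∀ x, q p * q x * q p = φ x • q p := by
    intro x
    have := f1 x
    rw [← hq, map_sub, sub_eq_zero, map_mul, map_mul, map_smul] at this; exact this
  set P := q p with hP
  obtain ⟨n, n1, nk, ⟨y, hy⟩, hmax⟩ := gl_step
    (fun n => ∃ y : ℕ → A, ∀ i < n, ∀ l < n, φ (star (y i) * y l) = if i = l then 1 else 0)
    ⟨fun _ => 1, fun i hi l hl => by
      rw [if_pos (by omega)]; simpa using f2⟩ k hk (by
      rintro ⟨y, hy⟩
      apply hn
      set z : A := ∑ i ∈ Finset.range k, ((i : ℝ) + 1) • (y i * p * p * star (y i)) with hz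
      have z0 : 0 ≤ z := Finset.sum_nonneg fun i hi => smul_nonneg (by positivity) (by
        have := gl_ss (p * star (y i))
        rw [star_mul, star_star, ps] at this
        simpa only [mul_assoc] using this)
      refine ⟨z, z0, ⟨_, gl_le_norm_one z z0⟩, fun l hl hmem => ?_⟩
      have h1 : z * (y l * p) - ((l : ℝ) + 1) • (y l * p) ∈ M.1 := by
        rw [← hq, map_sub, sub_eq_zero, qr, map_mul, hz, map_sum, Finset.sum_mul,
          Finset.sum_eq_single l]
        · rw [qr, smul_mul_assoc]
          congr 1
          simp only [map_mul]
          have := P3 (star (y l) * y l)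
          rw [hy l hl l hl, if_pos rfl, one_smul, map_mul] at this
          calc _ = q (y l) * (P * (P * (q (star (y l)) * q (y l)) * P)) := by
                simp only [mul_assoc]; rfl
            _ = _ := by rw [this, P2]
        · intro i hi hil
          rw [qr, smul_mul_assoc]
          simp only [map_mul]
          have := P3 (star (y i) * y l)
          rw [hy i (Finset.mem_range.1 hi) l hl, if_neg hil, zero_smul, map_mul] at this
          have e : q (y i) * P * P * q (star (y i)) * (q (y l) * P) =
            q (y i) * (P * (P * (q (star (y i)) * q (y l)) * P)) := by
                simp only [mul_assoc]
          rw [e, this, mul_zero, mul_zero, smul_zero]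
        · intro h; exact absurd (Finset.mem_range.2 hl) h
      have h2 := gl_eig M.1 hM z (y l * p) _ (gl_sa z0) h1 (glb l) (glb_c l)
      rw [glb_pt] at h2
      have h3 : (1 / 2 : ℝ) • (y l * p) ∈ M.1 := by
        have := M.1.sub_mem (M.1.mul_mem_right _ (y l * p) hmem) h2
        rwa [sub_sub_cancel] at this
      have h4 : y l * p ∈ M.1 := by
        have := gl_smul_mem M.1 2 h3
        rw [smul_smul] at this; norm_num at this; exact this
      apply P1
      have := P3 (star (y l) * y l)
      rw [hy l hl l hl, if_pos rfl, one_smul, map_mul] at this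
      rw [← this, mul_assoc, mul_assoc, ← map_mul q (y l) p, (hq _).2 h4]; simp)
  -- completeness
  have hcomp : ∀ x, q x * P = ∑ i ∈ Finset.range n, φ (star (y i) * x) • (q (y i) * P) := by
    intro x
    set w : A := x - ∑ i ∈ Finset.range n, φ (star (y i) * x) • y i with hw
    have hort : ∀ l < n, φ (star (y l) * w) = 0 := by
      intro l hl
      rw [hw, mul_sub, map_sub, Finset.mul_sum, map_sum, Finset.sum_eq_single l]
      · rw [mul_smul_comm, map_smul, hy l hl l hl, if_pos rfl, smul_eq_mul, mul_one, sub_self]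
      · intro i hi hil
        rw [mul_smul_comm, map_smul, hy l hl i (Finset.mem_range.1 hi), if_neg (Ne.symm hil), smul_zero]
      · intro h; exact absurd (Finset.mem_range.2 hl) h
    have hort' : ∀ l < n, φ (star w * y l) = 0 := by
      intro l hl
      have := f3 (star (y l) * w)
      rwa [star_mul, star_star, hort l hl, star_zero] at this
    have h0 : φ (star w * w) = 0 := by
      by_contra hne
      obtain ⟨r, r0, hr⟩ := f4 w
      have r1 : 0 < r := lt_of_le_of_ne r0 (by rintro rfl; exact hne (by simpa using hr))
      apply hmax
      have hcs : (((√r)⁻¹ : ℝ) : ℂ) * (((√r)⁻¹ : ℝ) : ℂ) * (r : ℂ) = 1 := by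
        norm_cast
        rw [← mul_inv, Real.mul_self_sqrt r0, inv_mul_cancel₀ r1.ne']
      set s : ℂ := (((√r)⁻¹ : ℝ) : ℂ) with hs
      have ss : star s = s := Complex.conj_ofReal _
      refine ⟨fun i => if i = n then s • w else y i, fun i hi l hl => ?_⟩
      by_cases c1 : i = n <;> by_cases c2 : l = n
      · subst c1; subst c2
        simp only [if_true]
        rw [star_smul, ss, smul_mul_smul_comm, map_smul, hr, smul_eq_mul, hcs]
      · simp only [c1, c2, if_true, if_false]
        rw [star_smul, smul_mul_assoc, map_smul, hort' l (by omega), smul_zero, if_neg (Ne.symm c2)]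
      · simp only [c1, c2, if_true, if_false]
        rw [mul_smul_comm, map_smul, hort i (by omega), smul_zero]
      · simp only [c1, c2, if_false]
        exact hy i (by omega) l (by omega)
    have := (hq _).2 (f5 w h0)
    rw [map_mul, hw, map_sub, sub_mul, sub_eq_zero, map_sum, Finset.sum_mul] at this
    rw [this]
    refine Finset.sum_congr rfl fun i hi => ?_
    rw [map_smul, smul_mul_assoc]
  have hmul : ∀ a b i l, φ (star (y i) * (a * b) * y l) =
      ∑ j : Fin n, φ (star (y i) * a * y j) * φ (star (y j) * b * y l) := by
    intro a b i l
    have h1 := P3 (star (y i) * (a * b) * y l)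
    have h2 : P * q (star (y i) * (a * b) * y l) * P = P * q (star (y i) * a) * (q (b * y l) * P) := by
      simp only [map_mul, mul_assoc]
    rw [h2, hcomp (b * y l), Finset.mul_sum] at h1
    have h3 : ∀ j, P * q (star (y i) * a) * (φ (star (y j) * (b * y l)) • (q (y j) * P)) =
        (φ (star (y i) * a * y j) * φ (star (y j) * b * y l)) • P := by
      intro j
      rw [mul_smul_comm, mul_comm (φ _), mul_smul, ← P3 (star (y i) * a * y j)]
      simp only [map_mul, mul_assoc]
    simp only [h3] at h1
    rw [← Finset.sum_smul, Finset.sum_range (fun j => φ (star (y i) * a * y j) * φ (star (y j) * b * y l))] at h1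
    rw [← sub_eq_zero, ← sub_smul] at h1
    rcases smul_eq_zero.1 h1 with h | h
    · exact (sub_eq_zero.1 h).symm
    · exact absurd h P1
  let π : A →⋆ₙₐ[ℂ] Matrix (Fin n) (Fin n) ℂ :=
    { toFun := fun a => Matrix.of fun i l => φ (star (y i) * a * y l)
      map_smul' := fun c a => by ext i l; simp [mul_smul_comm, smul_mul_assoc]
      map_zero' := by ext i l; simp
      map_add' := fun a b => by ext i l; simp [mul_add, add_mul]
      map_mul' := fun a b => by
        ext i l; rw [Matrix.mul_apply]; exact hmul a b i l
      map_star' := fun a => by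
        ext i l
        rw [Matrix.star_apply]
        change φ (star (y i) * star a * y l) = star (φ (star (y l) * a * y i))
        rw [← f3]; congr 1; simp [mul_assoc] }
  have h0 := congrFun (congrFun (H n n1 nk π 1) ⟨0, by omega⟩) ⟨0, by omega⟩
  change φ (star (y 0) * 1 * y 0) = 0 at h0
  rw [mul_one, hy 0 (by omega) 0 (by omega), if_pos rfl] at h0
  exact one_ne_zero h0

end G8

section G9
open Filter Topology Set
set_option linter.unusedSectionVars false
set_option linter.unusedVariables false
open ZeroAtInfty
variable {A : Type*} [CStarAlgebra A] [PartialOrder A] [StarOrderedRing A]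

lemma gl_dxc (hsr1 : Dense {a : A | IsUnit a}) (d c : A) (hd : ∀ M : GlMax A, d ∉ M.1)
    (hc : ∀ M : GlMax A, c ∉ M.1) : ∃ x, ∀ M : GlMax A, d * x * c ∉ M.1 := by
  obtain ⟨S, ⟨x, rfl⟩, h⟩ := gl_family hsr1 (range fun x => d * x * c) ⟨0, by simp⟩ (by
    rintro _ ⟨x1, rfl⟩ _ ⟨x2, rfl⟩ u v
    refine ⟨x2 + (x1 * c * u + x2 * c * v) * d * x1, ?_⟩
    simp only [mul_add, add_mul, mul_assoc]) 1 (fun M => by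
      obtain ⟨x, hx⟩ := glMax_prime M d c (hd M) (hc M)
      exact ⟨_, ⟨x, rfl⟩, glQ_one_iff.2 hx⟩)
  exact ⟨x, fun M => glQ_one_iff.1 (h M)⟩

lemma gl_link2 (hsr1 : Dense {a : A | IsUnit a}) (c : ℕ → A) (n : ℕ)
    (hc : ∀ i ≤ n, ∀ M : GlMax A, c i ∉ M.1) :
    ∃ (d : A) (Y S : ℕ → A), (∀ i ≤ n, d = Y i * S i) ∧ (∀ i ≤ n, ∃ w, Y i = w * c i) ∧
      ∀ M : GlMax A, d ∉ M.1 := by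
  induction n with
  | zero =>
    refine ⟨c 0, c, fun _ => 1, fun i hi => ?_, fun i hi => ⟨1, (one_mul _).symm⟩, hc 0 le_rfl⟩
    obtain rfl : i = 0 := by omega
    rw [mul_one]
  | succ n ih =>
    obtain ⟨d, Y, S, h1, h2, h3⟩ := ih fun i hi => hc i (by omega)
    obtain ⟨x, hx⟩ := gl_dxc hsr1 (c (n + 1)) d (hc _ le_rfl) h3
    refine ⟨c (n + 1) * x * d, fun i => if i = n + 1 then c (n + 1) else c (n + 1) * x * Y i,
      fun i => if i = n + 1 then x * d else S i, fun i hi => ?_, fun i hi => ?_, hx⟩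
    · by_cases h : i = n + 1
      · simp only [h, if_true, mul_assoc]
      · simp only [h, if_false]
        rw [mul_assoc _ (Y i), ← h1 i (by omega)]
    · by_cases h : i = n + 1
      · exact ⟨1, by simp [h]⟩
      · obtain ⟨w, hw⟩ := h2 i (by omega)
        refine ⟨c (n + 1) * x * w, ?_⟩
        simp only [h, if_false]
        rw [hw, mul_assoc _ w]

lemma gl_vs (hsr1 : Dense {a : A | IsUnit a}) (c : ℕ → A) (n : ℕ)
    (hc0 : ∀ i ≤ n, 0 ≤ c i) (hco : ∀ i ≤ n, ∀ j ≤ n, i ≠ j → c i * c j = 0)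
    (hc : ∀ i ≤ n, ∀ M : GlMax A, c i ∉ M.1) :
    ∃ (d : A) (v : ℕ → A), (∀ i ≤ n, ∀ j ≤ n, star (v i) * v j = if i = j then star d * d else 0) ∧
      ∀ M : GlMax A, d ∉ M.1 := by
  obtain ⟨d, Y, S, h1, h2, h3⟩ := gl_link2 hsr1 c n hc
  refine ⟨d, fun i => glS (star (Y i) * Y i) * S i, fun i hi j hj => ?_, h3⟩
  simp only
  rw [star_mul, glS_star]
  by_cases hij : i = j
  · subst hij
    rw [if_pos rfl]
    calc _ = star (S i) * (glS (star (Y i) * Y i) * glS (star (Y i) * Y i)) * S i := by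
          simp only [mul_assoc]
      _ = _ := by
          rw [glS_sq _ (gl_ss _), h1 i hi, star_mul]; simp only [mul_assoc]
  · rw [if_neg hij]
    have hz : (star (Y i) * Y i) * (star (Y j) * Y j) = 0 := by
      obtain ⟨w, hw⟩ := h2 i hi
      obtain ⟨w', hw'⟩ := h2 j hj
      rw [hw, hw', star_mul, star_mul, (gl_sa (hc0 j hj)).star_eq]
      calc _ = star (c i) * star w * w * (c i * c j) * star w' * (w' * c j) := by
            simp only [mul_assoc]
        _ = _ := by rw [hco i hi j hj hij]; simp
    have hz1 : glS (star (Y i) * Y i) * (star (Y j) * Y j) = 0 :=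
      gl_ann0 _ _ (gl_sa (gl_ss _)) hz _ (by fun_prop) (by simp)
    have hz2 : (star (Y j) * Y j) * glS (star (Y i) * Y i) = 0 := by
      have := congrArg star hz1
      simpa [glS_star] using this
    have hz3 : glS (star (Y j) * Y j) * glS (star (Y i) * Y i) = 0 :=
      gl_ann0 _ _ (gl_sa (gl_ss _)) hz2 _ (by fun_prop) (by simp)
    have hz4 : glS (star (Y i) * Y i) * glS (star (Y j) * Y j) = 0 := by
      have := congrArg star hz3
      simpa [glS_star] using this
    calc _ = star (S i) * (glS (star (Y i) * Y i) * glS (star (Y j) * Y j)) * S j := by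
          simp only [mul_assoc]
      _ = _ := by rw [hz4]; simp

/-- extension by zero -/
noncomputable def glE (f : C₀(↥(Set.Ioc (0:ℝ) 1), ℂ)) (t : ℝ) : ℂ :=
  if h : 0 < t then f ⟨min t 1, lt_min h one_pos, min_le_right _ _⟩ else 0

lemma glE_c (f : C₀(↥(Set.Ioc (0:ℝ) 1), ℂ)) : Continuous (glE f) := by
  rw [continuous_iff_continuousAt]
  intro t0
  rcases lt_or_ge 0 t0 with h0 | h0
  · have : ContinuousOn (glE f) (Ioi 0) := by
      rw [continuousOn_iff_continuous_domRestrict]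
      have : (Ioi (0:ℝ)).domRestrict (glE f) = fun t : Ioi (0:ℝ) =>
          f ⟨min t 1, lt_min t.2 one_pos, min_le_right _ _⟩ := by
        funext t
        exact dif_pos (show (0:ℝ) < t from t.2)
      rw [this]
      exact f.continuous.comp (by fun_prop)
    exact this.continuousAt (Ioi_mem_nhds h0)
  · have e : glE f t0 = 0 := by unfold glE; rw [dif_neg (not_lt.2 h0)]
    unfold ContinuousAt
    rw [e]
    intro s hs
    have h1 := f.zero_at_infty' hs
    rw [mem_map, mem_cocompact] at h1
    obtain ⟨K, hK, hKs⟩ := h1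
    have hK' : IsClosed (Subtype.val '' K) := (hK.image continuous_subtype_val).isClosed
    have hmem : (fun t : ℝ => min t 1) ⁻¹' (Subtype.val '' K)ᶜ ∈ 𝓝 t0 := by
      refine (hK'.isOpen_compl.preimage (by fun_prop)).mem_nhds ?_
      rintro ⟨x, hx, hxt⟩
      have := x.2.1
      rw [hxt] at this
      have := min_le_left t0 1
      linarith
    rw [mem_map]
    filter_upwards [hmem] with t ht
    change glE f t ∈ s
    unfold glE
    split_ifs with h
    · apply hKs
      intro hc
      exact ht ⟨_, hc, rfl⟩
    · exact mem_of_mem_nhds hs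

noncomputable def glG (ε : ℝ) (h : A) (f : C₀(↥(Set.Ioc (0:ℝ) 1), ℂ)) : A :=
  cfc (fun s : ℂ => glE f (glth ε s.re) * ((glka ε s.re : ℝ) : ℂ)) h

lemma glG_c {ε : ℝ} (hε : 0 < ε) (f : C₀(↥(Set.Ioc (0:ℝ) 1), ℂ)) :
    Continuous (fun s : ℂ => glE f (glth ε s.re) * ((glka ε s.re : ℝ) : ℂ)) := by
  have h1 := (glE_c f).comp ((glth_c ε).comp Complex.continuous_re)
  have h2 := Complex.continuous_ofReal.comp ((glka_c hε).comp Complex.continuous_re)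
  exact h1.mul h2

lemma glG_add {ε : ℝ} (hε : 0 < ε) (h : A) (f g : C₀(↥(Set.Ioc (0:ℝ) 1), ℂ)) :
    glG ε h (f + g) = glG ε h f + glG ε h g := by
  unfold glG
  rw [← cfc_add _ _ _ (glG_c hε f).continuousOn (glG_c hε g).continuousOn]
  congr 1; funext s
  unfold glE
  split_ifs <;> simp [add_mul]

lemma glG_smul {ε : ℝ} (hε : 0 < ε) (h : A) (c : ℂ) (f : C₀(↥(Set.Ioc (0:ℝ) 1), ℂ)) :
    glG ε h (c • f) = c • glG ε h f := by
  unfold glG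
  rw [← cfc_smul c _ _ (glG_c hε f).continuousOn]
  congr 1; funext s
  unfold glE
  split_ifs <;> simp [mul_assoc]

lemma glG_zero (ε : ℝ) (h : A) : glG ε h 0 = 0 := by
  unfold glG
  have : (fun s : ℂ => glE 0 (glth ε s.re) * ((glka ε s.re : ℝ) : ℂ)) = fun _ => 0 := by
    funext s
    unfold glE
    split_ifs <;> simp
  rw [this]; exact cfc_const_zero ℂ h

lemma glG_star (ε : ℝ) (h : A) (f : C₀(↥(Set.Ioc (0:ℝ) 1), ℂ)) :
    glG ε h (star f) = star (glG ε h f) := by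
  unfold glG
  rw [← cfc_star]
  congr 1; funext s
  unfold glE
  split_ifs <;> simp

lemma glG_mul {ε : ℝ} (hε : 0 < ε) (h : A) (hh : 0 ≤ h) (f g : C₀(↥(Set.Ioc (0:ℝ) 1), ℂ)) :
    glG ε h f * h * glG ε h g = glG ε h (f * g) := by
  have hs := gl_sa hh
  have hn : IsStarNormal h := hs.isStarNormal
  unfold glG
  conv_lhs => enter [1, 2]; rw [← cfc_id' ℂ h]
  rw [← cfc_mul _ _ h (glG_c hε f).continuousOn (by fun_prop), ← cfc_mul _ _ h
    (by exact ((glG_c hε f).mul continuous_id).continuousOn) (glG_c hε g).continuousOn]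
  refine cfc_congr fun s hsp => ?_
  have hre : s = (s.re : ℂ) := hs.mem_spectrum_eq_re hsp
  generalize s.re = t at *
  subst hre
  unfold glE
  split_ifs with h0
  · have ht : ε < t := by
      unfold glth at h0
      by_contra hc
      rw [max_eq_right (by linarith)] at h0
      exact lt_irrefl _ h0
    have hk : ((glka ε t : ℝ) : ℂ) * (t : ℂ) = 1 := by
      norm_cast
      unfold glka
      rw [max_eq_left ht.le, inv_mul_cancel₀ (by linarith)]
    simp only [ZeroAtInftyContinuousMap.coe_mul, Pi.mul_apply]
    linear_combination (f _ * g _ * ((glka ε t : ℝ) : ℂ)) * hk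
  · simp

end G9

section G10
open Filter Topology Set
set_option linter.unusedSectionVars false
set_option linter.unusedVariables false
open ZeroAtInfty
variable {A : Type*} [CStarAlgebra A] [PartialOrder A] [StarOrderedRing A]

noncomputable def glPhi (k : ℕ) (v : Fin k → A) (h : A) (hh : 0 ≤ h) (ε : ℝ) (hε : 0 < ε)
    (hv : ∀ i j, star (v i) * v j = if i = j then h else 0) :
    Matrix (Fin k) (Fin k) C₀(↥(Set.Ioc (0:ℝ) 1), ℂ) →⋆ₙₐ[ℂ] A where
  toFun m := ∑ i, ∑ j, v i * glG ε h (m i j) * star (v j)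
  map_smul' c m := by
    simp only [Matrix.smul_apply, glG_smul hε, mul_smul_comm, smul_mul_assoc, Finset.smul_sum,
      MonoidHom.id_apply]
  map_zero' := by simp [glG_zero]
  map_add' m n := by
    simp only [Matrix.add_apply, glG_add hε, mul_add, add_mul, Finset.sum_add_distrib]
  map_mul' m n := by
    have hsum : ∀ (s : Finset (Fin k)) (F : Fin k → C₀(↥(Set.Ioc (0:ℝ) 1), ℂ)),
        glG ε h (∑ j ∈ s, F j) = ∑ j ∈ s, glG ε h (F j) := by
      classical
      intro s F
      induction s using Finset.induction_on with
      | empty => simp [glG_zero]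
      | insert a s ha ih => rw [Finset.sum_insert ha, Finset.sum_insert ha, glG_add hε, ih]
    have key : ∀ i j x l, (v i * glG ε h (m i j) * star (v j)) * (v x * glG ε h (n x l) * star (v l)) =
        if j = x then v i * glG ε h (m i j * n x l) * star (v l) else 0 := by
      intro i j x l
      have := hv j x
      calc _ = v i * glG ε h (m i j) * (star (v j) * v x) * glG ε h (n x l) * star (v l) := by
            simp only [mul_assoc]
        _ = _ := by
            rw [this]; split_ifs
            · rw [← glG_mul hε h hh]; simp only [mul_assoc]
            · simp
    have e1 : (∑ i, ∑ j, v i * glG ε h (m i j) * star (v j)) *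
        (∑ x, ∑ l, v x * glG ε h (n x l) * star (v l)) =
        ∑ i, ∑ j, ∑ l, v i * glG ε h (m i j * n j l) * star (v l) := by
      rw [Finset.sum_mul]
      refine Finset.sum_congr rfl fun i _ => ?_
      rw [Finset.sum_mul]
      refine Finset.sum_congr rfl fun j _ => ?_
      rw [Finset.mul_sum, Finset.sum_eq_single j]
      · rw [Finset.mul_sum]
        refine Finset.sum_congr rfl fun l _ => ?_
        rw [key, if_pos rfl]
      · intro x _ hx
        rw [Finset.mul_sum]
        refine Finset.sum_eq_zero fun l _ => ?_
        rw [key, if_neg (Ne.symm hx)]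
      · simp
    rw [e1]
    refine Finset.sum_congr rfl fun i _ => ?_
    rw [Finset.sum_comm]
    refine Finset.sum_congr rfl fun l _ => ?_
    rw [Matrix.mul_apply, hsum, Finset.mul_sum, Finset.sum_mul]
  map_star' m := by
    simp only [Matrix.star_apply, glG_star, star_sum, star_mul, star_star]
    rw [Finset.sum_comm]
    simp only [mul_assoc]

lemma glPhi_full (k : ℕ) (i0 : Fin k) (v : Fin k → A) (h : A) (hh : 0 ≤ h) (ε : ℝ) (hε : 0 < ε)
    (hv : ∀ i j, star (v i) * v j = if i = j then h else 0)
    (hf : ∀ M : GlMax A, cfc (glth ε) h ∉ M.1)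
    (I : TwoSidedIdeal A) (hI : ∀ x, glPhi k v h hh ε hε hv x ∈ I) (a : A) : a ∈ I := by
  classical
  have hs := gl_sa hh
  have h1 : (1 : A) ∈ I := by
    by_contra hn
    obtain ⟨M, hM⟩ := glMax_exists I hn
    apply hf M
    let f0 : C₀(↥(Set.Ioc (0:ℝ) 1), ℂ) :=
      { toFun := fun t => ((t : ℝ) : ℂ)
        continuous_toFun := by fun_prop
        zero_at_infty' := by
          rw [Metric.tendsto_nhds]
          intro δ hδ
          rw [Filter.Eventually, mem_cocompact]
          refine ⟨{t | δ ≤ (t : ℝ)}, ?_, fun t ht => ?_⟩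
          · rw [Subtype.isCompact_iff]
            have : (Subtype.val '' {t : ↥(Set.Ioc (0:ℝ) 1) | δ ≤ (t : ℝ)}) = Icc δ 1 := by
              ext t
              constructor
              · rintro ⟨x, hx, rfl⟩; exact ⟨hx, x.2.2⟩
              · intro ht; exact ⟨⟨t, hδ.trans_le ht.1, ht.2⟩, ht.1, rfl⟩
            rw [this]; exact isCompact_Icc
          · simp only [mem_compl_iff, mem_ofPred_eq, not_le] at ht
            simp only [mem_ofPred_eq, dist_zero_right, Complex.norm_real, Real.norm_eq_abs]
            rwa [abs_of_pos t.2.1] }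
    have hE : ∀ t, glE f0 t = ((max 0 (min t 1) : ℝ) : ℂ) := by
      intro t
      unfold glE
      split_ifs with ht
      · rw [max_eq_right (le_min ht.le zero_le_one)]; rfl
      · rw [max_eq_left ((min_le_left _ _).trans (not_lt.1 ht))]; simp
    have hG : glG ε h f0 = cfc (fun t : ℝ => max 0 (min (glth ε t) 1) * glka ε t) h := by
      unfold glG
      rw [cfc_real_eq_complex _ hs]
      congr 1; funext s
      rw [hE]; push_cast; rfl
    have e1 : glPhi k v h hh ε hε hv (Matrix.single i0 i0 f0) = v i0 * glG ε h f0 * star (v i0) := by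
      change ∑ i, ∑ j, v i * glG ε h (Matrix.single i0 i0 f0 i j) * star (v j) = _
      rw [Finset.sum_eq_single i0, Finset.sum_eq_single i0]
      · simp
      · intro j _ hj; simp [Matrix.single_apply, hj.symm, glG_zero]
      · simp
      · intro i _ hi
        refine Finset.sum_eq_zero fun j _ => ?_
        simp [Matrix.single_apply, hi.symm, glG_zero]
      · simp
    have h2 : v i0 * glG ε h f0 * star (v i0) ∈ M.1 := by rw [← e1]; exact hM (hI _)
    have h3 : h * glG ε h f0 * h ∈ M.1 := by
      have := M.1.mul_mem_right _ (v i0) (M.1.mul_mem_left (star (v i0)) _ h2)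
      have e := hv i0 i0
      rw [if_pos rfl] at e
      convert this using 1
      rw [← e]; simp only [mul_assoc]
    have h4 := M.1.mul_mem_left (cfc (fun t : ℝ => glka ε t * max 1 (glth ε t)) h) _ h3
    convert h4 using 1
    have c1 := glth_c ε
    have c2 := glka_c hε
    rw [hG, gl_idm _ (by fun_prop) h hs, gl_mid _ (by fun_prop) h hs,
      gl_cm _ _ (by fun_prop) (by fun_prop)]
    congr 1; funext t
    have e1 := glka_th hε t
    have e2 : max 1 (glth ε t) * max 0 (min (glth ε t) 1) = glth ε t := by
      rw [max_eq_right (le_min (glth_nn ε t) zero_le_one), min_comm, max_mul_min, one_mul]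
    have e3 : glka ε t * t * (glka ε t * t * glth ε t) = glth ε t := by rw [e1, e1]
    linear_combination (-(glka ε t * t * glka ε t * t)) * e2 - e3
  have := I.mul_mem_left a _ h1
  rwa [mul_one] at this

lemma gl_hard (hsr1 : Dense {a : A | IsUnit a}) (k : ℕ) (hk : 1 ≤ k)
    (H : ∀ (j : ℕ), 1 ≤ j → j < k →
        ∀ φ : A →⋆ₙₐ[ℂ] Matrix (Fin j) (Fin j) ℂ, ∀ a : A, φ a = 0) :
      ∃ φ : Matrix (Fin k) (Fin k) C₀(↥(Set.Ioc (0:ℝ) 1), ℂ) →⋆ₙₐ[ℂ] A,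
        ∀ I : TwoSidedIdeal A, IsClosed (I : Set A) →
          (∀ x, φ x ∈ I) → ∀ a : A, a ∈ I := by
  obtain ⟨n, rfl⟩ : ∃ n, k = n + 1 := ⟨k - 1, by omega⟩
  obtain ⟨c, c0, c1, c2, _⟩ := gl_ind hsr1 n (1 : A) (gl_F1 (n + 1) hk H)
  obtain ⟨d, v, hv, hd⟩ := gl_vs hsr1 c n c0 c1 c2
  obtain ⟨ε, hε, hcut⟩ := gl_allcut 1 d fun M => glQ_one_iff.2 (hd M)
  have hv' : ∀ i j : Fin (n + 1), star (v i) * v j = if i = j then star d * d else 0 := by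
    intro i j
    rw [hv i (by omega) j (by omega)]
    simp only [Fin.ext_iff]
  exact ⟨glPhi (n + 1) (fun i => v i) _ (gl_ss d) ε hε hv', fun I _ hI a =>
    glPhi_full (n + 1) 0 _ _ (gl_ss d) ε hε hv' (fun M => glQ_one_iff.1 (hcut M)) I hI a⟩

end G10

section G11
open ZeroAtInfty
variable {A : Type*} [CStarAlgebra A]

open scoped Matrix.Norms.L2Operator in
lemma gl_pi_cont (j : ℕ) (π : A →⋆ₙₐ[ℂ] Matrix (Fin j) (Fin j) ℂ) : IsClosed {a : A | π a = 0} := by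
  letI : NonUnitalCStarAlgebra (Matrix (Fin j) (Fin j) ℂ) := 
    { (inferInstance : NonUnitalNormedRing (Matrix (Fin j) (Fin j) ℂ)),
      (inferInstance : StarRing (Matrix (Fin j) (Fin j) ℂ)),
      (inferInstance : NormedSpace ℂ (Matrix (Fin j) (Fin j) ℂ)) with
      toCompleteSpace := FiniteDimensional.complete ℂ _
      toCStarRing := inferInstance
      smul_assoc := fun a b c => smul_assoc a b c
      smul_comm := fun a b c => smul_comm a b c
      star_smul := fun a b => star_smul a b }
  have hc : Continuous π := by
    refine AddMonoidHomClass.continuous_of_bound π 1 fun x => ?_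
    rw [one_mul]
    exact NonUnitalStarAlgHom.norm_apply_le π x
  exact isClosed_singleton.preimage hc

open scoped ComplexOrder in
lemma gl_lin (j k : ℕ) (hjk : j < k) (X : Fin k → Matrix (Fin j) (Fin j) ℂ)
    (H : Matrix (Fin j) (Fin j) ℂ) (h : ∀ i i', star (X i) * X i' = if i = i' then H else 0) (i : Fin k) :
    X i = 0 := by
  have hH : H = 0 := by
    by_contra hne
    have : ∃ ξ, H.mulVec ξ ≠ 0 := by
      by_contra! hcon
      apply hne
      ext a b
      have := congrFun (hcon (Pi.single b 1)) a
      simpa using this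
    obtain ⟨ξ, hξ⟩ := this
    have hl : LinearIndependent ℂ fun i => (X i).mulVec ξ := by
      rw [Fintype.linearIndependent_iff]
      intro g hg l
      have h1 := congrArg (fun w => (star (X l)).mulVec w) hg
      simp only [Matrix.mulVec_sum, Matrix.mulVec_smul, Matrix.mulVec_mulVec, h, Matrix.mulVec_zero] at h1
      rw [Finset.sum_eq_single l] at h1
      · rw [if_pos rfl] at h1
        exact (smul_eq_zero.1 h1).resolve_right hξ
      · intro i _ hi
        rw [if_neg (Ne.symm hi)]; simp
      · simp
    have := hl.fintype_card_le_finrank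
    simp at this
    omega
  have := h i i
  rw [if_pos rfl, hH, Matrix.star_eq_conjTranspose, Matrix.conjTranspose_mul_self_eq_zero] at this
  exact this

lemma gl_easy (k : ℕ)
    (φ : Matrix (Fin k) (Fin k) C₀(↥(Set.Ioc (0:ℝ) 1), ℂ) →⋆ₙₐ[ℂ] A)
    (hφ : ∀ I : TwoSidedIdeal A, IsClosed (I : Set A) → (∀ x, φ x ∈ I) → ∀ a : A, a ∈ I)
    (j : ℕ) (hjk : j < k) (π : A →⋆ₙₐ[ℂ] Matrix (Fin j) (Fin j) ℂ) (a : A) : π a = 0 := by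
  have hz : ∀ x, π (φ x) = 0 := by
    have h1 : ∀ i l f, π (φ (Matrix.single i l f)) = 0 := by
      intro i l f
      refine gl_lin j k hjk (fun i => π (φ (Matrix.single i l f)))
        (π (φ (Matrix.single l l (star f * f)))) (fun i i' => ?_) i
      rw [← map_star, ← map_star, ← map_mul, ← map_mul, Matrix.star_eq_conjTranspose,
        Matrix.conjTranspose_single]
      split_ifs with h
      · subst h; rw [Matrix.single_mul_single_same]
      · rw [Matrix.single_mul_single_of_ne _ _ _ _ h, map_zero, map_zero]
    intro x
    rw [Matrix.matrix_eq_sum_single x]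
    simp only [map_sum, h1, Finset.sum_const_zero]
  let I : TwoSidedIdeal A := TwoSidedIdeal.mk' {a : A | π a = 0} (map_zero π)
    (fun {x y} hx hy => by
      change π (x + y) = 0
      rw [map_add, show π x = 0 from hx, show π y = 0 from hy, add_zero])
    (fun {x} hx => by
      change π (-x) = 0
      rw [map_neg, show π x = 0 from hx, neg_zero])
    (fun {x y} hy => by
      change π (x * y) = 0
      rw [map_mul, show π y = 0 from hy, mul_zero])
    (fun {x y} hx => by
      change π (x * y) = 0
      rw [map_mul, show π x = 0 from hx, zero_mul])
  have hmem : ∀ x, x ∈ I ↔ π x = 0 := fun x => TwoSidedIdeal.mem_mk' _ _ _ _ _ _ _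
  refine (hmem a).1 (hφ I ?_ (fun x => (hmem _).2 (hz x)) a)
  convert gl_pi_cont j π using 1
  ext x
  exact hmem x

end G11

open ZeroAtInfty

theorem glimm_halving_separable_unital_stableRankOne
    {A : Type*} [CStarAlgebra A] [TopologicalSpace.SeparableSpace A]
    (hsr1 : Dense {a : A | IsUnit a})
    (k : ℕ) (hk : 1 ≤ k) :
    (∀ (j : ℕ), 1 ≤ j → j < k →
        ∀ φ : A →⋆ₙₐ[ℂ] Matrix (Fin j) (Fin j) ℂ, ∀ a : A, φ a = 0) ↔
      ∃ φ : Matrix (Fin k) (Fin k) C₀(↥(Set.Ioc (0:ℝ) 1), ℂ) →⋆ₙₐ[ℂ] A,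
        ∀ I : TwoSidedIdeal A, IsClosed (I : Set A) →
          (∀ x, φ x ∈ I) → ∀ a : A, a ∈ I := by
  constructor
  · intro H
    letI := CStarAlgebra.spectralOrder A
    haveI := CStarAlgebra.spectralOrderedRing A
    exact gl_hard hsr1 k hk H
  · rintro ⟨φ, hφ⟩ j _ hjk π a
    exact gl_easy k φ hφ j hjk π a
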